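/- arXiv:2306.06778 — 11 statements merged into one kernel-verified Lean document; each statement's English description precedes it below -/
import Mathlib

section
/- Let p ≥ 1 and λ > 0 be real numbers, let n ≥ 1 be an integer, and let x, y_1, …, y_n be nonnegative real numbers. Then (x + ∑_{i=1}^n y_i)^p ≤ (1+λ)^{p-1} · x^p + ((1+λ)·n/λ)^{p-1} · ∑_{i=1}^n y_i^p. -/
/-!
Jensen's inequality for `t ↦ t ^ p` with weights `(c i)⁻¹` at the points `c i * z i` gives
`(∑ z i) ^ p ≤ ∑ c i ^ (p - 1) * z i ^ p` whenever `∑ (c i)⁻¹ = 1`. The theorem is the case of the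
`n + 1` numbers `x, y₁, …, yₙ` with `c = 1 + λ` at `x` and `c = (1 + λ) n / λ` at each `yᵢ`:
the weight of `x` is `1 / (1 + λ)`, and the remaining `λ / (1 + λ)` is shared equally by the `yᵢ`.
-/

theorem inv_mul_mul_rpow {c z : ℝ} (hc : 0 < c) (hz : 0 ≤ z) (p : ℝ) :
    c⁻¹ * (c * z) ^ p = c ^ (p - 1) * z ^ p := by
  rw [Real.mul_rpow hc.le hz, Real.rpow_sub_one hc.ne', ← mul_assoc, inv_mul_eq_div]

theorem rpow_sum_le_sum_rpow_sub_one_mul_rpow {ι : Type*} (s : Finset ι) {c z : ι → ℝ} {p : ℝ}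
    (hp : 1 ≤ p) (hc : ∀ i ∈ s, 0 < c i) (hc_sum : ∑ i ∈ s, (c i)⁻¹ = 1)
    (hz : ∀ i ∈ s, 0 ≤ z i) :
    (∑ i ∈ s, z i) ^ p ≤ ∑ i ∈ s, c i ^ (p - 1) * z i ^ p :=
  calc (∑ i ∈ s, z i) ^ p
      = (∑ i ∈ s, (c i)⁻¹ * (c i * z i)) ^ p := by
        rw [Finset.sum_congr rfl fun i hi => inv_mul_cancel_left₀ (hc i hi).ne' (z i)]
    _ ≤ ∑ i ∈ s, (c i)⁻¹ * (c i * z i) ^ p :=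
        Real.rpow_arith_mean_le_arith_mean_rpow s _ _ (fun i hi => (inv_pos.2 (hc i hi)).le)
          hc_sum (fun i hi => mul_nonneg (hc i hi).le (hz i hi)) hp
    _ = ∑ i ∈ s, c i ^ (p - 1) * z i ^ p :=
        Finset.sum_congr rfl fun i hi => inv_mul_mul_rpow (hc i hi) (hz i hi) p

theorem stmt0 (p lam : ℝ) (hp : 1 ≤ p) (hlam : 0 < lam) (n : ℕ) (hn : 1 ≤ n)
    (x : ℝ) (hx : 0 ≤ x) (y : Fin n → ℝ) (hy : ∀ i, 0 ≤ y i) :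
    (x + ∑ i, y i) ^ p ≤
      (1 + lam) ^ (p - 1) * x ^ p + ((1 + lam) * n / lam) ^ (p - 1) * ∑ i, y i ^ p := by
  have : (0 : ℝ) < n := Nat.cast_pos.2 hn
  let c : Fin (n + 1) → ℝ := Fin.cons (1 + lam) fun _ => (1 + lam) * n / lam
  let z : Fin (n + 1) → ℝ := Fin.cons x y
  have hc : ∀ i, 0 < c i := Fin.cases (by positivity : 0 < 1 + lam)
    fun _ => (by positivity : 0 < (1 + lam) * n / lam)
  have hc_sum : ∑ i, (c i)⁻¹ = 1 := by
    simp only [c, Fin.sum_univ_succ, Fin.cons_zero, Fin.cons_succ, Finset.sum_const,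
      Finset.card_univ, Fintype.card_fin, nsmul_eq_mul]
    field_simp
  have hz : ∀ i, 0 ≤ z i := Fin.cases hx hy
  simpa only [c, z, Fin.sum_univ_succ, Fin.cons_zero, Fin.cons_succ, ← Finset.mul_sum] using
    rpow_sum_le_sum_rpow_sub_one_mul_rpow Finset.univ hp (fun i _ => hc i) hc_sum fun i _ => hz i
end

section
/- Let F be a finite set (the columns). Let I and V be finite index sets, let {F_i}_{i∈I} be pairwise disjoint subsets of F, and for each v ∈ V let B_v ⊆ P_v ⊆ F with the sets {P_v}_{v∈V} pairwise disjoint. Define a matrix A whose rows are: one row r₀ with entry −1 in every column; for each i ∈ I, one row with entry +1 on the columns in F_i and 0 elsewhere, and one row with entry −1 on the columns in F_i and 0 elsewhere; for each v ∈ V, one row with entry +1 on the columns in B_v and 0 elsewhere, and one row with entry −1 on the columns in P_v and 0 elsewhere. Then A is totally unimodular, i.e., every square submatrix of A has determinant in {−1, 0, 1}. -/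
/-!
The rows of `A` are, up to sign, indicator vectors of the members of two laminar families: the whole
ground set with the `G i`, and the `B v` with the `P v`. If two members `T ⊆ S` of the same family
intersect, subtracting the row of `T` from that of `S` replaces `S` by `S \ T` without changing the
determinant, and for `S` minimal this keeps the family laminar. Iterating, one reaches two families
of pairwise disjoint sets, that is, the vertex-edge incidence matrix of a bipartite graph. There
either some column has at most one nonzero entry, and one expands along it, or every column has
exactly one entry `1` in each family, and the two families of rows have the same sum.
-/

open Function Matrix Set

section SignDeterminants

variable {R : Type*} [CommRing R]

lemma range_signCast : range (SignType.cast : SignType → R) = {-1, 0, 1} := by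
  rw [SignType.range_eq, insert_comm]
  simp

lemma mul_mem_range_signCast {a b : R} (ha : a ∈ range (SignType.cast : SignType → R))
    (hb : b ∈ range (SignType.cast : SignType → R)) :
    a * b ∈ range (SignType.cast : SignType → R) := by
  obtain ⟨s, rfl⟩ := ha
  obtain ⟨t, rfl⟩ := hb
  exact ⟨s * t, SignType.coe_mul s t⟩

lemma isTotallyUnimodular_sign_mul {m n : Type*} {A : Matrix m n R} (hA : A.IsTotallyUnimodular)
    (ε : m → SignType) : (of fun i j => (ε i : R) * A i j).IsTotallyUnimodular := by
  intro k f g hf hg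
  have hdet : ((of fun i j => (ε i : R) * A i j).submatrix f g).det =
      ((∏ i, ε (f i) : SignType) : R) * (A.submatrix f g).det := by
    rw [show ((∏ i, ε (f i) : SignType) : R) = ∏ i, (ε (f i) : R) from
      map_prod SignType.castHom _ _, ← det_mul_column]
    rfl
  rw [hdet]
  exact mul_mem_range_signCast ⟨_, rfl⟩ (hA k f g hf hg)

lemma det_mem_range_signCast_of_column {n : ℕ} {A : Matrix (Fin (n + 1)) (Fin (n + 1)) R}
    {i j : Fin (n + 1)} (hcol : ∀ k ≠ i, A k j = 0)
    (hij : A i j ∈ range (SignType.cast : SignType → R))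
    (hminor : (A.submatrix i.succAbove j.succAbove).det ∈
      range (SignType.cast : SignType → R)) :
    A.det ∈ range (SignType.cast : SignType → R) := by
  have hexpand : A.det =
      (-1) ^ (i + j : ℕ) * A i j * (A.submatrix i.succAbove j.succAbove).det := by
    rw [det_succ_column A j]
    exact Fintype.sum_eq_single i fun k hk => by rw [hcol k hk, mul_zero, zero_mul]
  rw [hexpand]
  exact mul_mem_range_signCast
    (mul_mem_range_signCast ⟨(-1) ^ (i + j : ℕ), by simp⟩ hij) hminor

end SignDeterminants

section LaminarFamilies

variable {ι κ α : Type*}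

/-- The matrix whose row `i` is the indicator vector of the set `S i`. -/
noncomputable def indicatorMatrix (R : Type*) [Zero R] [One R] (S : ι → Set α) : Matrix ι α R :=
  of fun i => (S i).indicator 1

/-- The condition on pairs that defines a laminar family: the sets are nested or disjoint. -/
def LaminarPair (s t : Set α) : Prop :=
  s ⊆ t ∨ t ⊆ s ∨ Disjoint s t

/-- The indexed family `S` is a union of laminar families, one for each value of `c`. Repeated sets
are allowed. -/
def LaminarOnFibers (c : ι → κ) (S : ι → Set α) : Prop :=
  ∀ ⦃i j⦄, c i = c j → LaminarPair (S i) (S j)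

/-- The indexed family `S` is a union of families of pairwise disjoint sets, one for each value of
`c`. -/
def DisjointOnFibers (c : ι → κ) (S : ι → Set α) : Prop :=
  ∀ ⦃i j⦄, c i = c j → i ≠ j → Disjoint (S i) (S j)

lemma LaminarPair.symm {s t : Set α} (h : LaminarPair s t) : LaminarPair t s := by
  rcases h with hst | hts | hdisj
  exacts [.inr (.inl hst), .inl hts, .inr (.inr hdisj.symm)]

lemma laminarPair_of_subset_of_disjoint {S T : ι → Set α} (hST : ∀ i, S i ⊆ T i)
    (hT : Pairwise (Disjoint on T)) (i j : ι) : LaminarPair (S i) (T j) := by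
  rcases eq_or_ne i j with rfl | hij
  exacts [.inl (hST i), .inr (.inr ((hT hij).mono_left (hST i)))]

namespace LaminarOnFibers

variable {c : ι → κ} {S : ι → Set α}

lemma preimage {ι' β : Type*} (hS : LaminarOnFibers c S) (f : ι' → ι) (g : β → α) :
    LaminarOnFibers (c ∘ f) fun k => g ⁻¹' S (f k) := by
  intro k l hkl
  rcases hS hkl with hsub | hsub | hdisj
  exacts [.inl (preimage_mono hsub), .inr (.inl (preimage_mono hsub)),
    .inr (.inr (hdisj.preimage g))]

lemma update [DecidableEq ι] (hS : LaminarOnFibers c S) {i : ι} {s : Set α}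
    (hs : ∀ k ≠ i, c k = c i → LaminarPair s (S k)) :
    LaminarOnFibers c (Function.update S i s) := by
  intro k l hkl
  by_cases hk : k = i <;> by_cases hl : l = i
  · subst hk hl
    exact .inl Subset.rfl
  · subst hk
    simpa [hl] using hs l hl hkl.symm
  · subst hl
    simpa [hk] using (hs k hk hkl).symm
  · simpa [hk, hl] using hS hkl

lemma exists_minimal_superset [Finite ι] (hS : LaminarOnFibers c S)
    (hnd : ¬ DisjointOnFibers c S) :
    ∃ i j, i ≠ j ∧ c i = c j ∧ (S j).Nonempty ∧ S j ⊆ S i ∧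
      ∀ k ≠ j, c k = c i → S j ⊆ S k → S i ⊆ S k := by
  let supersets : Set ι := {i | ∃ j, i ≠ j ∧ c i = c j ∧ (S j).Nonempty ∧ S j ⊆ S i}
  have hne : supersets.Nonempty := by
    simp only [DisjointOnFibers, not_forall] at hnd
    obtain ⟨i, j, hc, hij, hmeet⟩ := hnd
    obtain ⟨x, hxi, hxj⟩ := not_disjoint_iff.1 hmeet
    rcases hS hc with hsub | hsub | hdisj
    · exact ⟨j, i, hij.symm, hc.symm, ⟨x, hxi⟩, hsub⟩
    · exact ⟨i, j, hij, hc, ⟨x, hxj⟩, hsub⟩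
    · exact absurd hdisj hmeet
  obtain ⟨i, ⟨j, hij, hc, hj, hsub⟩, hmin⟩ := (toFinite supersets).exists_minimalFor S _ hne
  refine ⟨i, j, hij, hc, hj, hsub, fun k hkj hki hjk => ?_⟩
  rcases hS hki with hk_sub_i | hi_sub_k | hdisj
  · exact hmin ⟨j, hkj, hki.trans hc, hj, hjk⟩ hk_sub_i
  · exact hi_sub_k
  · exact absurd (hdisj.mono hjk hsub) (by simpa using hj.ne_empty)

lemma update_sdiff [DecidableEq ι] (hS : LaminarOnFibers c S) {i j : ι} (hc : c i = c j)
    (hmin : ∀ k ≠ j, c k = c i → S j ⊆ S k → S i ⊆ S k) :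
    LaminarOnFibers c (Function.update S i (S i \ S j)) := by
  refine hS.update fun k _ hki => ?_
  by_cases hkj : k = j
  · exact hkj ▸ .inr (.inr disjoint_sdiff_left)
  rcases hS hki with hk_sub_i | hi_sub_k | hdisj
  · rcases hS (hki.trans hc) with hk_sub_j | hj_sub_k | hdisj
    · exact .inr (.inr (disjoint_sdiff_left.mono_right hk_sub_j))
    · exact .inl (sdiff_subset.trans (hmin k hkj hki hj_sub_k))
    · exact .inr (.inl (subset_sdiff.2 ⟨hk_sub_i, hdisj⟩))
  · exact .inl (sdiff_subset.trans hi_sub_k)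
  · exact .inr (.inr (hdisj.symm.mono_left sdiff_subset))

end LaminarOnFibers

end LaminarFamilies

section Determinants

variable {ι κ α R : Type*} [CommRing R]

lemma det_indicatorMatrix_update_sdiff [Fintype α] [DecidableEq α] {S : α → Set α} {i j : α}
    (hij : i ≠ j) (hsub : S j ⊆ S i) :
    (indicatorMatrix R (update S i (S i \ S j))).det = (indicatorMatrix R S).det := by
  rw [← det_updateRow_add_smul_self (indicatorMatrix R S) hij (-1)]
  congr 1
  ext k x
  rcases eq_or_ne k i with rfl | hk
  · simp [indicatorMatrix, indicator_sdiff hsub, sub_eq_add_neg]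
  · simp [indicatorMatrix, hk]

lemma exists_lt_laminarOnFibers_det_eq [Fintype α] [DecidableEq α] {c : α → κ} {S : α → Set α}
    (hS : LaminarOnFibers c S) (hnd : ¬ DisjointOnFibers c S) :
    ∃ T < S, LaminarOnFibers c T ∧ (indicatorMatrix R T).det = (indicatorMatrix R S).det := by
  obtain ⟨i, j, hij, hc, hj, hsub, hmin⟩ := hS.exists_minimal_superset hnd
  refine ⟨update S i (S i \ S j), ?_, hS.update_sdiff hc hmin,
    det_indicatorMatrix_update_sdiff hij hsub⟩
  exact update_lt_self_iff.2 (sdiff_lt hsub hj.ne_empty)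

lemma exists_disjointOnFibers_det_eq [Fintype α] [DecidableEq α] {c : α → κ} {S : α → Set α}
    (hS : LaminarOnFibers c S) :
    ∃ T, DisjointOnFibers c T ∧ (indicatorMatrix R T).det = (indicatorMatrix R S).det := by
  induction S using WellFoundedLT.induction with
  | ind S ih =>
    by_cases hd : DisjointOnFibers c S
    · exact ⟨S, hd, rfl⟩
    · obtain ⟨S', hlt, hS', hdet'⟩ := exists_lt_laminarOnFibers_det_eq (R := R) hS hd
      obtain ⟨T, hT, hdet⟩ := ih S' hlt hS'
      exact ⟨T, hT, hdet.trans hdet'⟩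

-- The two colours are the signs `±1`, so that they double as the coefficients of the linear
-- relation between the rows.
lemma sum_sign_mul_indicator_eq_zero [Fintype ι] {c : ι → ℤˣ} {S : ι → Set α}
    (hS : DisjointOnFibers c S) {x : α} (hx : {i | x ∈ S i}.Nontrivial) :
    ∑ i, ((c i : ℤ) : R) * (S i).indicator 1 x = 0 := by
  obtain ⟨i, (hi : x ∈ S i), j, (hj : x ∈ S j), hij⟩ := hx
  have color_eq_neg {k l : ι} (hkl : k ≠ l) (hk : x ∈ S k) (hl : x ∈ S l) : c k = -c l :=
    Int.units_ne_iff_eq_neg.1 fun hc => disjoint_left.1 (hS hc hkl) hk hl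
  have notMem_of_ne (k : ι) (hk : k ≠ i ∧ k ≠ j) : x ∉ S k := fun hxk =>
    have hc : c k = c j := (color_eq_neg hk.1 hxk hi).trans (color_eq_neg hij.symm hj hi).symm
    disjoint_left.1 (hS hc hk.2) hxk hj
  rw [Fintype.sum_eq_add i j hij fun k hk => by simp [notMem_of_ne k hk]]
  simp [hi, hj, color_eq_neg hij hi hj]

lemma det_indicatorMatrix_eq_zero_of_nontrivial [Fintype α] [DecidableEq α] [Nonempty α]
    {c : α → ℤˣ} {S : α → Set α} (hS : DisjointOnFibers c S)
    (hcol : ∀ x, {i | x ∈ S i}.Nontrivial) : (indicatorMatrix R S).det = 0 := by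
  have hrel : (indicatorMatrix R S)ᵀ *ᵥ (fun i => ((c i : ℤ) : R)) = 0 := by
    ext x
    rw [mulVec_transpose]
    exact sum_sign_mul_indicator_eq_zero hS (hcol x)
  have hunit (i : α) : IsUnit ((c i : ℤ) : R) := (c i).isUnit.map (Int.castRingHom R)
  rw [← det_transpose]
  exact det_eq_zero_of_mulVec_eq_zero_of_mem_nonZeroDivisors hrel
    (hunit (Classical.arbitrary α)).mem_nonZeroDivisors

lemma det_indicatorMatrix_mem_of_disjointOnFibers {n : ℕ} {c : Fin n → ℤˣ}
    {S : Fin n → Set (Fin n)} (hS : DisjointOnFibers c S) :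
    (indicatorMatrix R S).det ∈ range (SignType.cast : SignType → R) := by
  induction n with
  | zero => exact ⟨1, by simp⟩
  | succ n ih =>
    by_cases hcol : ∀ x, {i | x ∈ S i}.Nontrivial
    · exact ⟨0, by simp [det_indicatorMatrix_eq_zero_of_nontrivial hS hcol]⟩
    simp only [not_forall, not_nontrivial_iff] at hcol
    obtain ⟨x, hx⟩ := hcol
    obtain ⟨i, hi⟩ : ∃ i, ∀ k ≠ i, x ∉ S k := by
      rcases hx.eq_empty_or_singleton with hempty | ⟨i, hsingle⟩
      · exact ⟨0, fun k _ hk => (hempty.subset hk).elim⟩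
      · exact ⟨i, fun k hki hk => hki (hsingle.subset hk)⟩
    refine det_mem_range_signCast_of_column (i := i) (j := x)
      (fun k hk => indicator_of_notMem (hi k hk) 1) ?_ ?_
    · by_cases hxi : x ∈ S i
      · exact ⟨1, by simp [indicatorMatrix, hxi]⟩
      · exact ⟨0, by simp [indicatorMatrix, hxi]⟩
    · exact ih (c := c ∘ i.succAbove) (S := fun k => x.succAbove ⁻¹' S (i.succAbove k))
        fun k l hc hkl => (hS hc (i.succAbove_right_injective.ne hkl)).preimage _

theorem isTotallyUnimodular_indicatorMatrix_of_laminarOnFibers {c : ι → ℤˣ}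
    {S : ι → Set α} (hS : LaminarOnFibers c S) : (indicatorMatrix R S).IsTotallyUnimodular := by
  intro n f g _ _
  obtain ⟨T, hT, hdet⟩ := exists_disjointOnFibers_det_eq (R := R) (hS.preimage f g)
  have hsub : (indicatorMatrix R S).submatrix f g = indicatorMatrix R fun k => g ⁻¹' S (f k) := rfl
  rw [hsub, ← hdet]
  exact det_indicatorMatrix_mem_of_disjointOnFibers hT

end Determinants

section StructuredLP

variable {R F I V : Type*}

lemma laminarOnFibers_structured {G : I → Set F} (hG : Pairwise (Disjoint on G))
    {B P : V → Set F} (hBP : ∀ v, B v ⊆ P v) (hP : Pairwise (Disjoint on P)) :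
    LaminarOnFibers
      (Sum.elim 1 (Sum.elim 1 (Sum.elim 1 (Sum.elim (-1) (-1)))) : Unit ⊕ I ⊕ I ⊕ V ⊕ V → ℤˣ)
      (Sum.elim (fun _ => univ) (Sum.elim G (Sum.elim G (Sum.elim B P)))) := by
  have hGG := laminarPair_of_subset_of_disjoint (fun i => Subset.refl (G i)) hG
  have hPP := laminarPair_of_subset_of_disjoint (fun v => Subset.refl (P v)) hP
  have hB_P := laminarPair_of_subset_of_disjoint hBP hP
  have hBB := laminarPair_of_subset_of_disjoint (fun v => Subset.refl (B v))
    fun v w hvw => (hP hvw).mono (hBP v) (hBP w)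
  have huniv (s : Set F) : LaminarPair s univ := .inl (subset_univ s)
  have hcolors : (1 : ℤˣ) ≠ -1 := by decide
  rintro (_ | i | i | v | v) (_ | j | j | w | w) hc
  all_goals first
    | exact absurd hc hcolors
    | exact absurd hc hcolors.symm
    | exact huniv _
    | exact (huniv _).symm
    | exact hGG _ _
    | exact hBB _ _
    | exact hB_P _ _
    | exact (hB_P _ _).symm
    | exact hPP _ _

theorem stmt7_general [CommRing R] (G : I → Set F) (hG : Pairwise (Disjoint on G))
    (B P : V → Set F) (hBP : ∀ v, B v ⊆ P v) (hP : Pairwise (Disjoint on P)) :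
    (fromRows (replicateRow Unit (-1)) <| fromRows (indicatorMatrix R G) <|
      fromRows (-indicatorMatrix R G) <|
      fromRows (indicatorMatrix R B) (-indicatorMatrix R P)).IsTotallyUnimodular := by
  convert isTotallyUnimodular_sign_mul
    (isTotallyUnimodular_indicatorMatrix_of_laminarOnFibers (R := R)
      (laminarOnFibers_structured hG hBP hP))
    (Sum.elim (-1) (Sum.elim 1 (Sum.elim (-1) (Sum.elim 1 (-1))))) using 1
  ext (_ | i | i | v | v) u <;> simp [indicatorMatrix]

end StructuredLP

theorem stmt7 {F I V : Type*} [Fintype F] [DecidableEq F] [Fintype I] [Fintype V]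
    (G : I → Finset F) (hG : ∀ i j : I, i ≠ j → Disjoint (G i) (G j))
    (B P : V → Finset F) (hBP : ∀ v, B v ⊆ P v)
    (hP : ∀ v w : V, v ≠ w → Disjoint (P v) (P w))
    (A : Matrix (Unit ⊕ I ⊕ I ⊕ V ⊕ V) F ℝ)
    (hA : A = fun r u =>
      match r with
      | .inl _ => -1
      | .inr (.inl i) => if u ∈ G i then 1 else 0
      | .inr (.inr (.inl i)) => if u ∈ G i then -1 else 0
      | .inr (.inr (.inr (.inl v))) => if u ∈ B v then 1 else 0
      | .inr (.inr (.inr (.inr v))) => if u ∈ P v then -1 else 0) :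
    ∀ (n : ℕ) (f : Fin n → Unit ⊕ I ⊕ I ⊕ V ⊕ V) (g : Fin n → F),
      Function.Injective f → Function.Injective g →
      (A.submatrix f g).det ∈ ({-1, 0, 1} : Set ℝ) := by
  suffices A.IsTotallyUnimodular by
    simpa only [IsTotallyUnimodular, range_signCast] using this
  convert stmt7_general (R := ℝ) (fun i => (G i : Set F))
    (fun i j hij => Finset.disjoint_coe.2 (hG i j hij)) (fun v => (B v : Set F))
    (fun v => (P v : Set F)) hBP (fun v w hvw => Finset.disjoint_coe.2 (hP v w hvw)) using 1
  rw [hA]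
  ext (_ | i | i | v | v) u <;> simp [indicatorMatrix, indicator_apply, neg_ite]
end

section
/- Let F be a finite set, let I and V be finite index sets, let {F_i}_{i∈I} be pairwise disjoint subsets of F, and for each v ∈ V let B_v ⊆ P_v ⊆ F where the sets {P_v}_{v∈V} are pairwise disjoint. Let k ∈ ℕ and, for each i ∈ I, integers α_i, β_i ≥ 0. Let Q be the set of all y : F → ℝ such that: y_u ≥ 0 for all u; α_i ≤ ∑_{u∈F_i} y_u ≤ β_i for all i ∈ I; ∑_{u∈F} y_u ≤ k; and for every v ∈ V, ∑_{u∈B_v} y_u ≥ 1/2 and ∑_{u∈P_v} y_u ≤ 1. Then for every cost function c : F → ℝ, if Q is nonempty, there exists y* ∈ Q such that ∑_{u∈F} c_u · y*_u ≤ ∑_{u∈F} c_u · y_u for every y ∈ Q, and 2·y*_u is an integer for every u ∈ F. -/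
/-- The feasible region `Q` of the linear program `StructuredLP`. -/
def StructuredLPFeasible {F I V : Type*} [Fintype F]
    (G : I → Finset F) (B P : V → Finset F) (k : ℕ) (α β : I → ℕ) (y : F → ℝ) : Prop :=
  (∀ u, 0 ≤ y u) ∧
  (∀ i, (α i : ℝ) ≤ ∑ u ∈ G i, y u ∧ ∑ u ∈ G i, y u ≤ (β i : ℝ)) ∧
  (∑ u, y u ≤ (k : ℝ)) ∧
  (∀ v, 1 / 2 ≤ ∑ u ∈ B v, y u ∧ ∑ u ∈ P v, y u ≤ 1)

/-!
Every constraint bounds the sum of `y` over a set by a half-integer, and apart from singletons these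
sets form two laminar families: the groups with the whole of `F`, and the balls with the super
balls. A linear cost attains its minimum over the compact region `Q` at an extreme point `y`.
Suppose some coordinate of `y` is not a half-integer. A constraint whose sum is not a half-integer
is slack, so it suffices to find a direction `d ≠ 0`, supported on the fractional coordinates, whose
sum vanishes on every set where the sum of `y` is a half-integer: then `y ± t d` stays in `Q` for
small `t`, contradicting extremality.

Such a `d` comes from a dimension count. Passing to atoms, each laminar family becomes a family of
disjoint sets with half-integral sums, and each of these contains no or at least two of the `n`
fractional coordinates. So each family gives at most `n / 2` conditions on `d`; if both give exactly
`n / 2`, both cover all fractional coordinates and the conditions are linearly dependent.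
-/

open Finset Function Topology

section DisjointFamilies

variable (K : Type*) [Field K] {E A C : Type*}

/-- The linear map sending a vector to its sums over the members of a family of finite sets. -/
def blockSum (p : A → Finset E) : (E → K) →ₗ[K] A → K :=
  LinearMap.pi fun a ↦ ∑ u ∈ p a, LinearMap.proj u

@[simp]
lemma blockSum_apply (p : A → Finset E) (d : E → K) (a : A) :
    blockSum K p d a = ∑ u ∈ p a, d u := by
  simp [blockSum]

variable {p : A → Finset E} {q : C → Finset E}

lemma two_mul_card_le_card_biUnion [Fintype A] [DecidableEq E]
    (hp : Pairwise (Disjoint on p)) (hp₂ : ∀ a, 2 ≤ #(p a)) :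
    2 * Fintype.card A ≤ #(univ.biUnion p) := by
  rw [card_biUnion fun a _ b _ hab ↦ hp hab, mul_comm]
  simpa using card_nsmul_le_sum univ (fun a ↦ #(p a)) 2 fun a _ ↦ hp₂ a

lemma sum_eq_sum_sum_of_biUnion_eq_univ [Fintype E] [Fintype A] [DecidableEq E] {M : Type*}
    [AddCommMonoid M] (hp : Pairwise (Disjoint on p)) (hpE : univ.biUnion p = univ) (d : E → M) :
    ∑ u, d u = ∑ a, ∑ u ∈ p a, d u := by
  rw [← hpE, sum_biUnion fun a _ b _ hab ↦ hp hab]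

lemma not_surjective_blockSum_prod [Fintype E] [Fintype A] [Fintype C] [DecidableEq E] [Nonempty A]
    (hp : Pairwise (Disjoint on p)) (hq : Pairwise (Disjoint on q))
    (hpE : univ.biUnion p = univ) (hqE : univ.biUnion q = univ) :
    ¬ Surjective ((blockSum K p).prod (blockSum K q)) := by
  classical
  intro hsurj
  obtain ⟨d, hd⟩ := hsurj (Pi.single (Classical.arbitrary A) 1, 0)
  obtain ⟨hdp, hdq⟩ : blockSum K p d = Pi.single (Classical.arbitrary A) 1 ∧ blockSum K q d = 0 :=
    Prod.ext_iff.1 hd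
  have hsum_one : ∑ u, d u = 1 := by
    simp_rw [sum_eq_sum_sum_of_biUnion_eq_univ hp hpE, ← blockSum_apply, hdp]
    simp
  have hsum_zero : ∑ u, d u = 0 := by
    simp_rw [sum_eq_sum_sum_of_biUnion_eq_univ hq hqE, ← blockSum_apply, hdq]
    simp
  exact one_ne_zero (hsum_one.symm.trans hsum_zero)

lemma not_injective_blockSum_prod [Finite E] [Finite A] [Finite C] [Nonempty E]
    (hp : Pairwise (Disjoint on p)) (hq : Pairwise (Disjoint on q))
    (hp₂ : ∀ a, 2 ≤ #(p a)) (hq₂ : ∀ c, 2 ≤ #(q c)) :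
    ¬ Injective ((blockSum K p).prod (blockSum K q)) := by
  classical
  have := Fintype.ofFinite E
  have := Fintype.ofFinite A
  have := Fintype.ofFinite C
  intro hinj
  have hA := two_mul_card_le_card_biUnion hp hp₂
  have hC := two_mul_card_le_card_biUnion hq hq₂
  have hpE := card_le_univ (univ.biUnion p)
  have hqE := card_le_univ (univ.biUnion q)
  have hE : Fintype.card E ≤ Fintype.card A + Fintype.card C := by
    simpa using LinearMap.finrank_le_finrank_of_injective hinj
  have : Nonempty A := Fintype.card_pos_iff.1 (by have := Fintype.card_pos (α := E); omega)
  have hrank : Module.finrank K (E → K) = Module.finrank K ((A → K) × (C → K)) := by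
    simpa using (by omega : Fintype.card E = Fintype.card A + Fintype.card C)
  refine not_surjective_blockSum_prod K hp hq ?_ ?_
    ((LinearMap.injective_iff_surjective_of_finrank_eq_finrank hrank).1 hinj)
  · exact (card_eq_iff_eq_univ _).1 (by omega)
  · exact (card_eq_iff_eq_univ _).1 (by omega)

end DisjointFamilies

lemma exists_ne_zero_sum_eq_zero_of_card_ne_one (K : Type*) [Field K] {E A C : Type*} [Finite E]
    [Nonempty E] [Finite A] [Finite C] {p : A → Finset E} {q : C → Finset E}
    (hp : Pairwise (Disjoint on p)) (hq : Pairwise (Disjoint on q))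
    (hp₁ : ∀ a, #(p a) ≠ 1) (hq₁ : ∀ c, #(q c) ≠ 1) :
    ∃ d : E → K, d ≠ 0 ∧ (∀ a, ∑ u ∈ p a, d u = 0) ∧ ∀ c, ∑ u ∈ q c, d u = 0 := by
  let p' (a : {a // (p a).Nonempty}) := p a
  let q' (c : {c // (q c).Nonempty}) := q c
  have hninj : ¬ Injective ((blockSum K p').prod (blockSum K q')) :=
    not_injective_blockSum_prod K (hp.comp_of_injective Subtype.val_injective)
      (hq.comp_of_injective Subtype.val_injective)
      (fun a ↦ by have := a.2.card_pos; have := hp₁ a; simp only [p']; omega)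
      (fun c ↦ by have := c.2.card_pos; have := hq₁ c; simp only [q']; omega)
  simp only [injective_iff_map_eq_zero, not_forall] at hninj
  obtain ⟨d, hd, hd₀⟩ := hninj
  obtain ⟨hdp, hdq⟩ : blockSum K p' d = 0 ∧ blockSum K q' d = 0 := Prod.ext_iff.1 hd
  refine ⟨d, hd₀, fun a ↦ ?_, fun c ↦ ?_⟩
  · obtain ha | ha := (p a).eq_empty_or_nonempty
    · simp [ha]
    · simpa [p'] using congrFun hdp ⟨a, ha⟩
  · obtain hc | hc := (q c).eq_empty_or_nonempty
    · simp [hc]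
    · simpa [q'] using congrFun hdq ⟨c, hc⟩

section Subgroup

variable {F M S : Type*} [AddCommGroup M] [SetLike S M] [AddSubgroupClass S M] {Λ : S} {y : F → M}

open scoped Classical in
lemma card_filter_notMem_ne_one {s : Finset F} (hs : ∑ u ∈ s, y u ∈ Λ) :
    #{u ∈ s | y u ∉ Λ} ≠ 1 := by
  intro hcard
  obtain ⟨u, hu⟩ := card_eq_one.1 hcard
  have hyu : y u = ∑ u ∈ s, y u - ∑ u ∈ s with y u ∈ Λ, y u := by
    rw [← sum_filter_add_sum_filter_not s (y · ∈ Λ) y, hu, sum_singleton, add_sub_cancel_left]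
  have hmem : u ∈ ({u ∈ s | y u ∉ Λ} : Finset F) := hu ▸ mem_singleton_self u
  refine (mem_filter.1 hmem).2 ?_
  rw [hyu]
  exact sub_mem hs (sum_mem fun v hv ↦ (mem_filter.1 hv).2)

lemma exists_ne_zero_sum_eq_zero_of_disjoint (K : Type*) [Field K] {A C : Type*} [Finite F]
    [Finite A] [Finite C] {p : A → Finset F} {q : C → Finset F}
    (hp : Pairwise (Disjoint on p)) (hq : Pairwise (Disjoint on q)) (hy : ∃ u, y u ∉ Λ)
    (hpΛ : ∀ a, ∑ u ∈ p a, y u ∈ Λ) (hqΛ : ∀ c, ∑ u ∈ q c, y u ∈ Λ) :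
    ∃ d : F → K, d ≠ 0 ∧ (∀ u, y u ∈ Λ → d u = 0) ∧
      (∀ a, ∑ u ∈ p a, d u = 0) ∧ ∀ c, ∑ u ∈ q c, d u = 0 := by
  classical
  let E := {u // y u ∉ Λ}
  have : Nonempty E := nonempty_subtype.2 hy
  have disjoint_fractional {s t : Finset F} (hst : Disjoint s t) :
      Disjoint (s.subtype (y · ∉ Λ)) (t.subtype (y · ∉ Λ)) := by
    simpa [disjoint_left] using fun u _ hu ↦ disjoint_left.1 hst hu
  have card_fractional {s : Finset F} (hs : ∑ u ∈ s, y u ∈ Λ) : #(s.subtype (y · ∉ Λ)) ≠ 1 := by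
    simpa only [card_subtype] using card_filter_notMem_ne_one hs
  obtain ⟨d, hd₀, hdp, hdq⟩ := exists_ne_zero_sum_eq_zero_of_card_ne_one K
    (p := fun a ↦ (p a).subtype (y · ∉ Λ)) (q := fun c ↦ (q c).subtype (y · ∉ Λ))
    (fun a b hab ↦ disjoint_fractional (hp hab)) (fun a b hab ↦ disjoint_fractional (hq hab))
    (fun a ↦ card_fractional (hpΛ a)) (fun c ↦ card_fractional (hqΛ c))
  let d' : F → K := extend Subtype.val d 0
  have hd'_val (u : E) : d' u = d u := Subtype.val_injective.extend_apply d 0 u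
  have hd'_zero (u : F) (hu : y u ∈ Λ) : d' u = 0 := extend_apply' _ _ _ (by simpa using hu)
  have sum_d' (s : Finset F) : ∑ u ∈ s, d' u = ∑ u ∈ s.subtype (y · ∉ Λ), d u := by
    simp_rw [← hd'_val, sum_subtype_eq_sum_filter]
    exact (sum_filter_of_ne fun u _ ↦ mt (hd'_zero u)).symm
  refine ⟨d', fun h ↦ hd₀ ?_, hd'_zero, fun a ↦ (sum_d' _).trans (hdp a),
    fun c ↦ (sum_d' _).trans (hdq c)⟩
  ext u
  rw [← hd'_val, h, Pi.zero_apply, Pi.zero_apply]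

end Subgroup

/-- A family of finite sets is laminar if any two members are disjoint or nested. -/
def IsLaminar {F : Type*} (𝒜 : Set (Finset F)) : Prop :=
  ∀ s ∈ 𝒜, ∀ t ∈ 𝒜, Disjoint s t ∨ s ⊆ t ∨ t ⊆ s

open scoped Classical in
/-- The atom of a member `s` of a laminar family `𝒜`: the elements of `s` for which `s` is the
smallest member of `𝒜` containing them, i.e. `s` minus the members of `𝒜` strictly inside it. -/
noncomputable def laminarAtom {F : Type*} (𝒜 : Set (Finset F)) (s : Finset F) : Finset F :=
  {u ∈ s | ∀ t ∈ 𝒜, u ∈ t → s ⊆ t}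

section Laminar

variable {F : Type*} {𝒜 ℬ : Set (Finset F)}

lemma mem_laminarAtom {s : Finset F} {u : F} :
    u ∈ laminarAtom 𝒜 s ↔ u ∈ s ∧ ∀ t ∈ 𝒜, u ∈ t → s ⊆ t := by
  simp [laminarAtom]

lemma pairwiseDisjoint_laminarAtom (𝒜 : Set (Finset F)) : 𝒜.PairwiseDisjoint (laminarAtom 𝒜) := by
  refine fun s hs t ht hst ↦ disjoint_left.2 fun u hus hut ↦ hst ?_
  rw [mem_laminarAtom] at hus hut
  exact (hus.2 t ht hut.1).antisymm (hut.2 s hs hus.1)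

namespace IsLaminar

lemma mono (hℬ : IsLaminar ℬ) (h : 𝒜 ⊆ ℬ) : IsLaminar 𝒜 :=
  fun s hs t ht ↦ hℬ s (h hs) t (h ht)

lemma insert_univ [Fintype F] (h𝒜 : IsLaminar 𝒜) : IsLaminar (insert univ 𝒜) := by
  rintro s (rfl | hs) t (rfl | ht)
  · exact .inr (.inl subset_rfl)
  · exact .inr (.inr (subset_univ t))
  · exact .inr (.inl (subset_univ s))
  · exact h𝒜 s hs t ht

lemma range_of_disjoint {I : Type*} {G : I → Finset F}
    (hG : ∀ i j, i ≠ j → Disjoint (G i) (G j)) : IsLaminar (Set.range G) := by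
  rintro _ ⟨i, rfl⟩ _ ⟨j, rfl⟩
  obtain rfl | hij := eq_or_ne i j
  · exact .inr (.inl subset_rfl)
  · exact .inl (hG i j hij)

lemma range_union_range_of_subset {V : Type*} {B P : V → Finset F} (hBP : ∀ v, B v ⊆ P v)
    (hP : ∀ v w, v ≠ w → Disjoint (P v) (P w)) : IsLaminar (Set.range B ∪ Set.range P) := by
  have subset_of_mem {s : Finset F} (hs : s ∈ Set.range B ∪ Set.range P) :
      ∃ v, s ⊆ P v ∧ (s = B v ∨ s = P v) := by
    obtain ⟨v, rfl⟩ | ⟨v, rfl⟩ := hs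
    · exact ⟨v, hBP v, .inl rfl⟩
    · exact ⟨v, subset_rfl, .inr rfl⟩
  intro s hs t ht
  obtain ⟨v, hsv, hs⟩ := subset_of_mem hs
  obtain ⟨w, htw, ht⟩ := subset_of_mem ht
  obtain rfl | hvw := eq_or_ne v w
  · grind
  · exact .inl ((hP v w hvw).mono hsv htw)

lemma exists_mem_laminarAtom (h𝒜 : IsLaminar 𝒜) {s : Finset F} (hs : s ∈ 𝒜) {u : F} (hu : u ∈ s) :
    ∃ t ∈ 𝒜, t ⊆ s ∧ u ∈ laminarAtom 𝒜 t := by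
  obtain ⟨t, hts, ⟨ht, hut⟩, hmin⟩ :=
    exists_minimal_le_of_wellFoundedLT (fun t ↦ t ∈ 𝒜 ∧ u ∈ t) s ⟨hs, hu⟩
  refine ⟨t, ht, hts, mem_laminarAtom.2 ⟨hut, fun r hr hur ↦ ?_⟩⟩
  obtain htr | htr | hrt := h𝒜 t ht r hr
  · exact absurd hur (disjoint_left.1 htr hut)
  · exact htr
  · exact hmin ⟨hr, hur⟩ hrt

open scoped Classical in
lemma sum_eq_sum_laminarAtom {M : Type*} [AddCommMonoid M] (h𝒜 : IsLaminar 𝒜)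
    {s : Finset F} (hs : s ∈ 𝒜) (f : F → M) :
    ∑ u ∈ s, f u = ∑ t ∈ s.powerset with t ∈ 𝒜, ∑ u ∈ laminarAtom 𝒜 t, f u := by
  have hunion : s = {t ∈ s.powerset | t ∈ 𝒜}.biUnion (laminarAtom 𝒜) := by
    ext u
    simp only [mem_biUnion, mem_filter, mem_powerset]
    constructor
    · intro hu
      obtain ⟨t, ht, hts, hut⟩ := h𝒜.exists_mem_laminarAtom hs hu
      exact ⟨t, ⟨hts, ht⟩, hut⟩
    · rintro ⟨t, ⟨hts, -⟩, hut⟩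
      exact hts (mem_laminarAtom.1 hut).1
  conv_lhs => rw [hunion]
  exact sum_biUnion ((pairwiseDisjoint_laminarAtom 𝒜).subset fun t ht ↦ (mem_filter.1 ht).2)

lemma sum_laminarAtom_mem {M S : Type*} [AddCommGroup M] [SetLike S M] [AddSubgroupClass S M]
    {Λ : S} (h𝒜 : IsLaminar 𝒜) {f : F → M}
    (hf : ∀ s ∈ 𝒜, ∑ u ∈ s, f u ∈ Λ) (s : Finset F) (hs : s ∈ 𝒜) :
    ∑ u ∈ laminarAtom 𝒜 s, f u ∈ Λ := by
  classical
  induction s using Finset.strongInduction with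
  | H s ih =>
    have hmem : s ∈ {t ∈ s.powerset | t ∈ 𝒜} := by simp [hs]
    rw [eq_sub_of_add_eq ((add_sum_erase _ _ hmem).trans (h𝒜.sum_eq_sum_laminarAtom hs f).symm)]
    refine sub_mem (hf s hs) (sum_mem fun t ht ↦ ?_)
    simp only [mem_erase, mem_filter, mem_powerset] at ht
    exact ih t (ht.2.1.ssubset_of_ne ht.1) ht.2.2

lemma sum_eq_zero_of_sum_laminarAtom_eq_zero {M : Type*} [AddCommMonoid M] (h𝒜 : IsLaminar 𝒜)
    {f : F → M} (hf : ∀ s ∈ 𝒜, ∑ u ∈ laminarAtom 𝒜 s, f u = 0) {s : Finset F} (hs : s ∈ 𝒜) :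
    ∑ u ∈ s, f u = 0 := by
  classical
  rw [h𝒜.sum_eq_sum_laminarAtom hs]
  exact sum_eq_zero fun t ht ↦ hf t (mem_filter.1 ht).2

end IsLaminar

lemma exists_ne_zero_sum_eq_zero_of_isLaminar (K : Type*) [Field K] [Finite F] {M S : Type*}
    [AddCommGroup M] [SetLike S M] [AddSubgroupClass S M] {Λ : S} (h𝒜 : IsLaminar 𝒜)
    (hℬ : IsLaminar ℬ) {y : F → M} (hy : ∃ u, y u ∉ Λ) :
    ∃ d : F → K, d ≠ 0 ∧ ∀ s ∈ 𝒜 ∪ ℬ ∪ Set.range singleton,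
      ∑ u ∈ s, y u ∈ Λ → ∑ u ∈ s, d u = 0 := by
  let 𝒜' := {s ∈ 𝒜 | ∑ u ∈ s, y u ∈ Λ}
  let ℬ' := {s ∈ ℬ | ∑ u ∈ s, y u ∈ Λ}
  have h𝒜' : IsLaminar 𝒜' := h𝒜.mono (Set.sep_subset _ _)
  have hℬ' : IsLaminar ℬ' := hℬ.mono (Set.sep_subset _ _)
  obtain ⟨d, hd₀, hdy, hd𝒜, hdℬ⟩ := exists_ne_zero_sum_eq_zero_of_disjoint K
    (p := fun s : 𝒜' ↦ laminarAtom 𝒜' s) (q := fun s : ℬ' ↦ laminarAtom ℬ' s)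
    ((pairwiseDisjoint_laminarAtom 𝒜').subtype _ _) ((pairwiseDisjoint_laminarAtom ℬ').subtype _ _)
    hy (fun s ↦ h𝒜'.sum_laminarAtom_mem (fun t ht ↦ ht.2) s s.2)
    (fun s ↦ hℬ'.sum_laminarAtom_mem (fun t ht ↦ ht.2) s s.2)
  refine ⟨d, hd₀, ?_⟩
  rintro s ((hs | hs) | ⟨u, rfl⟩) hsΛ
  · exact h𝒜'.sum_eq_zero_of_sum_laminarAtom_eq_zero (fun t ht ↦ hd𝒜 ⟨t, ht⟩) ⟨hs, hsΛ⟩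
  · exact hℬ'.sum_eq_zero_of_sum_laminarAtom_eq_zero (fun t ht ↦ hdℬ ⟨t, ht⟩) ⟨hs, hsΛ⟩
  · simpa using hdy u (by simpa using hsΛ)

end Laminar

section ExtremePoints

lemma subset_of_isPreconnected_of_disjoint_frontier {X : Type*} [TopologicalSpace X] {U J : Set X}
    (hU : IsPreconnected U) (hUJ : Disjoint U (frontier J)) (hne : (U ∩ J).Nonempty) : U ⊆ J := by
  have hcover : U ⊆ interior J ∪ interior Jᶜ :=
    compl_frontier_eq_union_interior (s := J) ▸ hUJ.subset_compl_right
  obtain ⟨x, hxU, hxJ⟩ := hne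
  have hxint : x ∈ interior J :=
    (hcover hxU).resolve_right fun hx ↦ interior_subset hx hxJ
  exact (hU.subset_left_of_subset_union isOpen_interior isOpen_interior
    (disjoint_compl_right.mono interior_subset interior_subset) hcover ⟨x, hxU, hxint⟩).trans
    interior_subset

lemma eventually_forall_mem_of_frontier_subset {X : Type*} [TopologicalSpace X]
    [LocallyConnectedSpace X] {Λ : Set X} (hΛ : IsClosed Λ) {x : X} (hx : x ∉ Λ) :
    ∀ᶠ x' in 𝓝 x, ∀ J : Set X, frontier J ⊆ Λ → x ∈ J → x' ∈ J := by
  filter_upwards [connectedComponentIn_mem_nhds (hΛ.isOpen_compl.mem_nhds hx)] with x' hx' J hJ hxJ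
  refine subset_of_isPreconnected_of_disjoint_frontier isPreconnected_connectedComponentIn
    ?_ ⟨x, mem_connectedComponentIn hx, hxJ⟩ hx'
  exact disjoint_compl_left.mono (connectedComponentIn_subset _ _) hJ

lemma eq_zero_of_mem_extremePoints_of_eventually_mem {E : Type*} [AddCommGroup E] [Module ℝ E]
    {Q : Set E} {y d : E} (hy : y ∈ Q.extremePoints ℝ) (hd : ∀ᶠ t : ℝ in 𝓝 0, y + t • d ∈ Q) :
    d = 0 := by
  have hd' : ∀ᶠ t : ℝ in 𝓝 0, y - t • d ∈ Q := by
    have hneg : Filter.Tendsto (fun t : ℝ ↦ -t) (𝓝 0) (𝓝 0) := by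
      simpa using (continuous_neg (G := ℝ)).tendsto 0
    simpa [sub_eq_add_neg] using hneg.eventually hd
  obtain ⟨t, ⟨hadd, hsub⟩, ht⟩ :=
    ((hd.and hd').filter_mono nhdsWithin_le_nhds |>.and self_mem_nhdsWithin).exists
      (f := 𝓝[>] (0 : ℝ))
  have hmid : y ∈ openSegment ℝ (y + t • d) (y - t • d) :=
    ⟨1 / 2, 1 / 2, by norm_num, by norm_num, by norm_num, by module⟩
  have htd : t • d = 0 := by simpa using hy.2 hadd hsub hmid
  exact (smul_eq_zero.1 htd).resolve_left ht.ne'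

lemma exists_mem_extremePoints_isMinOn {E : Type*} [AddCommGroup E] [Module ℝ E]
    [TopologicalSpace E] [T2Space E] [IsTopologicalAddGroup E] [ContinuousSMul ℝ E]
    [LocallyConvexSpace ℝ E] {Q : Set E} (hQ : IsCompact Q) (hne : Q.Nonempty) (l : E →L[ℝ] ℝ) :
    ∃ y ∈ Q.extremePoints ℝ, IsMinOn l Q y := by
  have hexp : IsExposed ℝ Q ((-l).toExposed Q) := ContinuousLinearMap.toExposed.isExposed
  obtain ⟨x, hx, hxmin⟩ := hQ.exists_isMinOn hne l.continuous.continuousOn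
  obtain ⟨y, hy⟩ := (hexp.isCompact hQ).extremePoints_nonempty
    ⟨x, hx, fun z hz ↦ neg_le_neg (hxmin hz)⟩
  exact ⟨y, hexp.isExtreme.extremePoints_subset_extremePoints hy,
    fun z hz ↦ neg_le_neg_iff.1 (hy.1.2 z hz)⟩

end ExtremePoints

/-- The set of vectors cut out by constraints on sums of coordinates: a pair `(s, J)` in `𝒞` stands
for the constraint `∑ u ∈ s, y u ∈ J`. -/
def sumConstraintSet {F : Type*} (𝒞 : Set (Finset F × Set ℝ)) : Set (F → ℝ) :=
  {y | ∀ C ∈ 𝒞, ∑ u ∈ C.1, y u ∈ C.2}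

section SumConstraintSet

variable {F : Type*} {𝒞 : Set (Finset F × Set ℝ)}

lemma isClosed_sumConstraintSet (h𝒞 : ∀ C ∈ 𝒞, IsClosed C.2) : IsClosed (sumConstraintSet 𝒞) := by
  simp only [sumConstraintSet, Set.ofPred_forall]
  exact isClosed_biInter fun C hC ↦ (h𝒞 C hC).preimage (by fun_prop)

lemma eventually_add_smul_mem_sumConstraintSet [Finite F] {Λ : Set ℝ} (hΛ : IsClosed Λ)
    (h𝒞 : ∀ C ∈ 𝒞, frontier C.2 ⊆ Λ) {y d : F → ℝ} (hy : y ∈ sumConstraintSet 𝒞)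
    (hd : ∀ C ∈ 𝒞, ∑ u ∈ C.1, y u ∈ Λ → ∑ u ∈ C.1, d u = 0) :
    ∀ᶠ t : ℝ in 𝓝 0, y + t • d ∈ sumConstraintSet 𝒞 := by
  have hslack (s : Finset F) : ∀ᶠ t : ℝ in 𝓝 0, ∑ u ∈ s, y u ∉ Λ → ∀ J : Set ℝ, frontier J ⊆ Λ →
      ∑ u ∈ s, y u ∈ J → ∑ u ∈ s, (y + t • d) u ∈ J := by
    rw [Filter.eventually_imp_distrib_left]
    intro hs
    have htendsto : Filter.Tendsto (fun t : ℝ ↦ ∑ u ∈ s, (y + t • d) u) (𝓝 0)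
        (𝓝 (∑ u ∈ s, y u)) :=
      Continuous.tendsto' (by fun_prop) _ _ (by simp)
    exact htendsto.eventually (eventually_forall_mem_of_frontier_subset hΛ hs)
  filter_upwards [Filter.eventually_all.2 hslack] with t ht C hC
  by_cases hs : ∑ u ∈ C.1, y u ∈ Λ
  · simpa [sum_add_distrib, ← mul_sum, hd C hC hs] using hy C hC
  · exact ht C.1 hs C.2 (h𝒞 C hC) (hy C hC)

theorem mem_of_mem_extremePoints_sumConstraintSet [Finite F] {Λ : AddSubgroup ℝ}
    (hΛ : IsClosed (Λ : Set ℝ)) {𝒜 ℬ : Set (Finset F)} (h𝒜 : IsLaminar 𝒜) (hℬ : IsLaminar ℬ)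
    (h𝒞 : ∀ C ∈ 𝒞, C.1 ∈ 𝒜 ∪ ℬ ∪ Set.range singleton ∧ frontier C.2 ⊆ Λ) {y : F → ℝ}
    (hy : y ∈ (sumConstraintSet 𝒞).extremePoints ℝ) (u : F) : y u ∈ Λ := by
  by_contra hu
  obtain ⟨d, hd₀, hd⟩ := exists_ne_zero_sum_eq_zero_of_isLaminar ℝ h𝒜 hℬ ⟨u, hu⟩
  exact hd₀ (eq_zero_of_mem_extremePoints_of_eventually_mem hy
    (eventually_add_smul_mem_sumConstraintSet hΛ (fun C hC ↦ (h𝒞 C hC).2) hy.1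
      fun C hC ↦ hd C.1 (h𝒞 C hC).1))

end SumConstraintSet

/-- The additive group `(1/2)ℤ` of half-integers. -/
noncomputable def halfIntegers : AddSubgroup ℝ :=
  AddSubgroup.zmultiples (1 / 2)

lemma mem_halfIntegers {x : ℝ} : x ∈ halfIntegers ↔ ∃ z : ℤ, 2 * x = z := by
  rw [halfIntegers, AddSubgroup.mem_zmultiples_iff]
  refine exists_congr fun z ↦ ?_
  rw [zsmul_eq_mul]
  constructor <;> intro h <;> linarith

lemma natCast_mem_halfIntegers (n : ℕ) : (n : ℝ) ∈ halfIntegers :=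
  mem_halfIntegers.2 ⟨2 * n, by push_cast; rfl⟩

lemma isClosed_halfIntegers : IsClosed (halfIntegers : Set ℝ) :=
  AddSubgroup.isClosed_of_discrete (H := AddSubgroup.zmultiples (1 / 2 : ℝ))

section StructuredLP

variable {F I V : Type*} [Fintype F] (G : I → Finset F) (B P : V → Finset F) (k : ℕ) (α β : I → ℕ)

/-- The constraints of `StructuredLP`, in the format of `sumConstraintSet`. -/
def structuredLPConstraints : Set (Finset F × Set ℝ) :=
  Set.range (fun u ↦ ({u}, Set.Ici 0)) ∪ Set.range (fun i ↦ (G i, Set.Ici (α i : ℝ))) ∪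
    Set.range (fun i ↦ (G i, Set.Iic (β i : ℝ))) ∪ {(univ, Set.Iic (k : ℝ))} ∪
    Set.range (fun v ↦ (B v, Set.Ici (1 / 2))) ∪ Set.range (fun v ↦ (P v, Set.Iic 1))

lemma mem_sumConstraintSet_structuredLPConstraints {y : F → ℝ} :
    y ∈ sumConstraintSet (structuredLPConstraints G B P k α β) ↔
      StructuredLPFeasible G B P k α β y := by
  simp only [sumConstraintSet, structuredLPConstraints, StructuredLPFeasible, Set.mem_ofPred_eq,
    Set.mem_union, Set.mem_singleton_iff, or_imp, forall_and, Set.forall_mem_range, forall_eq,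
    sum_singleton, Set.mem_Ici, Set.mem_Iic, and_assoc]

variable {G B P k α β}

lemma isClosed_of_mem_structuredLPConstraints {C : Finset F × Set ℝ}
    (hC : C ∈ structuredLPConstraints G B P k α β) : IsClosed C.2 := by
  obtain (((((⟨u, rfl⟩ | ⟨i, rfl⟩) | ⟨i, rfl⟩) | rfl) | ⟨v, rfl⟩) | ⟨v, rfl⟩) := hC
  exacts [isClosed_Ici, isClosed_Ici, isClosed_Iic, isClosed_Iic, isClosed_Ici, isClosed_Iic]

lemma fst_mem_of_mem_structuredLPConstraints {C : Finset F × Set ℝ}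
    (hC : C ∈ structuredLPConstraints G B P k α β) :
    C.1 ∈ insert univ (Set.range G) ∪ (Set.range B ∪ Set.range P) ∪ Set.range singleton := by
  obtain (((((⟨u, rfl⟩ | ⟨i, rfl⟩) | ⟨i, rfl⟩) | rfl) | ⟨v, rfl⟩) | ⟨v, rfl⟩) := hC <;> simp

lemma frontier_subset_of_mem_structuredLPConstraints {C : Finset F × Set ℝ}
    (hC : C ∈ structuredLPConstraints G B P k α β) : frontier C.2 ⊆ halfIntegers := by
  have half_mem : (1 / 2 : ℝ) ∈ halfIntegers := mem_halfIntegers.2 ⟨1, by norm_num⟩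
  have one_mem : (1 : ℝ) ∈ halfIntegers := mod_cast natCast_mem_halfIntegers 1
  obtain (((((⟨u, rfl⟩ | ⟨i, rfl⟩) | ⟨i, rfl⟩) | rfl) | ⟨v, rfl⟩) | ⟨v, rfl⟩) := hC <;>
    simp only [frontier_Ici, frontier_Iic, Set.singleton_subset_iff, SetLike.mem_coe]
  exacts [zero_mem _, natCast_mem_halfIntegers _, natCast_mem_halfIntegers _,
    natCast_mem_halfIntegers _, half_mem, one_mem]

lemma isCompact_structuredLP :
    IsCompact (sumConstraintSet (structuredLPConstraints G B P k α β)) := by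
  refine (isCompact_Icc (a := (0 : F → ℝ)) (b := fun _ ↦ (k : ℝ))).of_isClosed_subset
    (isClosed_sumConstraintSet fun C hC ↦ isClosed_of_mem_structuredLPConstraints hC)
    fun y hy ↦ ?_
  obtain ⟨hnonneg, -, hk, -⟩ := (mem_sumConstraintSet_structuredLPConstraints ..).1 hy
  exact ⟨hnonneg, fun u ↦ (single_le_sum (fun i _ ↦ hnonneg i) (mem_univ u)).trans hk⟩

end StructuredLP

theorem stmt8_general {F I V : Type*} [Fintype F]
    (G : I → Finset F) (hG : IsLaminar (Set.range G))
    (B P : V → Finset F) (hBP : IsLaminar (Set.range B ∪ Set.range P))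
    (k : ℕ) (α β : I → ℕ) (c : F → ℝ)
    (hne : ∃ y : F → ℝ, StructuredLPFeasible G B P k α β y) :
    ∃ ystar : F → ℝ, StructuredLPFeasible G B P k α β ystar ∧
      (∀ y : F → ℝ, StructuredLPFeasible G B P k α β y →
        ∑ u, c u * ystar u ≤ ∑ u, c u * y u) ∧
      (∀ u, ∃ z : ℤ, 2 * ystar u = (z : ℝ)) := by
  let cost : (F → ℝ) →L[ℝ] ℝ := ∑ u, c u • ContinuousLinearMap.proj u
  have cost_apply (y : F → ℝ) : cost y = ∑ u, c u * y u := by simp [cost]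
  simp only [← mem_sumConstraintSet_structuredLPConstraints, ← cost_apply] at hne ⊢
  obtain ⟨y, hy, hmin⟩ := exists_mem_extremePoints_isMinOn isCompact_structuredLP hne cost
  have hhalf (u : F) : y u ∈ halfIntegers :=
    mem_of_mem_extremePoints_sumConstraintSet isClosed_halfIntegers hG.insert_univ hBP
      (fun C hC ↦ ⟨fst_mem_of_mem_structuredLPConstraints hC,
        frontier_subset_of_mem_structuredLPConstraints hC⟩) hy u
  exact ⟨y, hy.1, fun y' hy' ↦ hmin hy', fun u ↦ mem_halfIntegers.1 (hhalf u)⟩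

theorem stmt8 {F I V : Type*} [Fintype F] [Fintype I] [Fintype V]
    (G : I → Finset F) (hG : ∀ i j : I, i ≠ j → Disjoint (G i) (G j))
    (B P : V → Finset F) (hBP : ∀ v, B v ⊆ P v)
    (hP : ∀ v w : V, v ≠ w → Disjoint (P v) (P w))
    (k : ℕ) (α β : I → ℕ)
    (c : F → ℝ)
    (hne : ∃ y : F → ℝ, StructuredLPFeasible G B P k α β y) :
    ∃ ystar : F → ℝ, StructuredLPFeasible G B P k α β ystar ∧
      (∀ y : F → ℝ, StructuredLPFeasible G B P k α β y →
        ∑ u, c u * ystar u ≤ ∑ u, c u * y u) ∧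
      (∀ u, ∃ z : ℤ, 2 * ystar u = (z : ℝ)) :=
  stmt8_general G (.range_of_disjoint hG) B P (.range_union_range_of_subset hBP hP) k α β c hne
end

section
/- Let F be a finite set partitioned into pairwise disjoint subsets F_1, …, F_ℓ whose union is F, let S_1, …, S_L be pairwise disjoint subsets of F, let k ∈ ℕ and let α_i, β_i ∈ ℕ for i = 1,…,ℓ. Suppose there exists y : F → ℝ such that 0 ≤ y_u ≤ 1 for all u ∈ F, ∑_{u∈F} y_u = k, α_i ≤ ∑_{u∈F_i} y_u ≤ β_i for every i, and ∑_{u∈S_j} y_u ≥ 1 for every j = 1,…,L. Then there exists a subset C ⊆ F with |C| = k such that C ∩ S_j ≠ ∅ for every j = 1,…,L and α_i ≤ |C ∩ F_i| ≤ β_i for every i = 1,…,ℓ. -/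
/-!
Send `y u` units of flow along an edge from the group of `u` to the set `S j` containing `u`, or to
a spare vertex if there is none. Feed every group from a source, drain every `S j` and the spare
vertex into a sink, and close up with a return edge from the sink to the source. This is a real
circulation, and the constraints only bound the flow through single edges by integers, so it
suffices to find an integral circulation within the same bounds.

An extreme point of the polytope of circulations within integral bounds is integral. Indeed, at each
endpoint of an edge with fractional flow, conservation forces a second such edge, so the fractional
edges are at least as many as their endpoints. The conservation laws at these endpoints add up to
zero, so some nonzero circulation lives on the fractional edges, and the point can be moved both
ways along it.
-/

open Finset
open scoped Function

section Circulation

variable {V E : Type*} [DecidableEq V] (src tgt : E → V)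

/-- The net inflow into each vertex of the directed multigraph with edge type `E`, in which `e` runs
from `src e` to `tgt e`. The circulations are the edge weights `x` with
`netInflow src tgt x = 0`. -/
def netInflow [Fintype E] : (E → ℝ) →ₗ[ℝ] V → ℝ where
  toFun x v := ∑ e with tgt e = v, x e - ∑ e with src e = v, x e
  map_add' x y := by
    ext v
    simp only [Pi.add_apply, sum_add_distrib]
    ring
  map_smul' c x := by
    ext v
    simp only [Pi.smul_apply, smul_eq_mul, ← mul_sum, RingHom.id_apply]
    ring

/-- The vertices that are the source or the target of an edge in `S`. -/
def endpoints (S : Finset E) : Finset V :=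
  S.image src ∪ S.image tgt

/-- The degree of `v` in the multigraph with edge set `S`; a loop counts twice. -/
def edgeDegree (S : Finset E) (v : V) : ℕ :=
  #{e ∈ S | src e = v} + #{e ∈ S | tgt e = v}

variable {src tgt}

theorem src_mem_endpoints {S : Finset E} {e : E} (he : e ∈ S) : src e ∈ endpoints src tgt S :=
  mem_union_left _ (mem_image_of_mem src he)

theorem tgt_mem_endpoints {S : Finset E} {e : E} (he : e ∈ S) : tgt e ∈ endpoints src tgt S :=
  mem_union_right _ (mem_image_of_mem tgt he)

theorem sum_edgeDegree_endpoints (S : Finset E) :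
    ∑ v ∈ endpoints src tgt S, edgeDegree src tgt S v = 2 * #S := by
  simp only [edgeDegree, sum_add_distrib]
  rw [← card_eq_sum_card_fiberwise fun _ he => src_mem_endpoints he,
    ← card_eq_sum_card_fiberwise fun _ he => tgt_mem_endpoints he, two_mul]

theorem card_endpoints_le_card {S : Finset E}
    (hdeg : ∀ v ∈ endpoints src tgt S, 2 ≤ edgeDegree src tgt S v) :
    #(endpoints src tgt S) ≤ #S := by
  have hsum := card_nsmul_le_sum _ _ _ hdeg
  rw [sum_edgeDegree_endpoints, smul_eq_mul] at hsum
  lia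

variable [Fintype E]

theorem netInflow_apply (x : E → ℝ) (v : V) :
    netInflow src tgt x v = ∑ e with tgt e = v, x e - ∑ e with src e = v, x e :=
  rfl

theorem sum_netInflow_endpoints {S : Finset E} {x : E → ℝ} (hx : ∀ e ∉ S, x e = 0) :
    ∑ v ∈ endpoints src tgt S, netInflow src tgt x v = 0 := by
  have mem_of_ne_zero : ∀ e, x e ≠ 0 → e ∈ S := fun e => not_imp_comm.1 (hx e)
  simp only [netInflow_apply, sum_sub_distrib, sum_fiberwise_eq_sum_filter]
  rw [sum_filter_of_ne fun e _ he => tgt_mem_endpoints (mem_of_ne_zero e he),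
    sum_filter_of_ne fun e _ he => src_mem_endpoints (mem_of_ne_zero e he), sub_self]

theorem netInflow_eq_zero_of_notMem_endpoints {S : Finset E} {x : E → ℝ}
    (hx : ∀ e ∉ S, x e = 0) {v : V} (hv : v ∉ endpoints src tgt S) :
    netInflow src tgt x v = 0 := by
  have x_eq_zero : ∀ e, tgt e = v ∨ src e = v → x e = 0 := by
    intro e h
    refine hx e fun he => hv ?_
    rcases h with rfl | rfl
    exacts [tgt_mem_endpoints he, src_mem_endpoints he]
  rw [netInflow_apply, sum_eq_zero fun e he => x_eq_zero e (.inl (mem_filter.1 he).2),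
    sum_eq_zero fun e he => x_eq_zero e (.inr (mem_filter.1 he).2), sub_self]

theorem exists_ne_zero_netInflow_eq_zero {S : Finset E} (hS : S.Nonempty)
    (hdeg : ∀ v ∈ endpoints src tgt S, 2 ≤ edgeDegree src tgt S v) :
    ∃ d : E → ℝ, d ≠ 0 ∧ (∀ e ∉ S, d e = 0) ∧ netInflow src tgt d = 0 := by
  let extend : (S → ℝ) →ₗ[ℝ] E → ℝ := Function.ExtendByZero.linearMap ℝ Subtype.val
  let inflow : (S → ℝ) →ₗ[ℝ] endpoints src tgt S → ℝ :=
    LinearMap.funLeft ℝ ℝ Subtype.val ∘ₗ netInflow src tgt ∘ₗ extend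
  have extend_supp : ∀ c, ∀ e ∉ S, extend c e = 0 := fun c e he =>
    Function.extend_apply' _ _ _ fun ⟨e', he'⟩ => he (he' ▸ e'.2)
  have inflow_not_surjective : ¬ Function.Surjective inflow := by
    intro hsurj
    obtain ⟨e, he⟩ := hS
    obtain ⟨c, hc⟩ := hsurj (Pi.single ⟨src e, src_mem_endpoints he⟩ 1)
    have hsum := sum_netInflow_endpoints (src := src) (tgt := tgt) (extend_supp c)
    rw [← sum_coe_sort] at hsum
    change ∑ v, inflow c v = 0 at hsum
    simp [hc] at hsum
  have inflow_not_injective : ¬ Function.Injective inflow := by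
    intro hinj
    have hle : #S ≤ #(endpoints src tgt S) := by
      simpa using LinearMap.finrank_le_finrank_of_injective hinj
    have hfinrank : Module.finrank ℝ (S → ℝ) = Module.finrank ℝ (endpoints src tgt S → ℝ) := by
      simpa using hle.antisymm (card_endpoints_le_card hdeg)
    exact inflow_not_surjective
      ((LinearMap.injective_iff_surjective_of_finrank_eq_finrank hfinrank).1 hinj)
  rw [injective_iff_map_eq_zero] at inflow_not_injective
  push Not at inflow_not_injective
  obtain ⟨c, hc, hc0⟩ := inflow_not_injective
  refine ⟨extend c, fun h => hc0 ?_, extend_supp c, funext fun v => ?_⟩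
  · ext e
    simpa [extend, Subtype.val_injective.extend_apply] using congrFun h e
  · by_cases hv : v ∈ endpoints src tgt S
    · exact congrFun hc ⟨v, hv⟩
    · exact netInflow_eq_zero_of_notMem_endpoints (extend_supp c) hv

end Circulation

section Integrality

theorem two_le_card_notMem_of_sum_eq_sum {ι M : Type*} [AddCommGroup M] (Z : AddSubgroup M)
    [DecidablePred (· ∈ Z)] {s t : Finset ι} {x : ι → M} (hst : ∑ i ∈ s, x i = ∑ i ∈ t, x i)
    {i : ι} (hi : i ∈ s) (hxi : x i ∉ Z) : 2 ≤ #{i ∈ s | x i ∉ Z} + #{i ∈ t | x i ∉ Z} := by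
  classical
  by_contra! hlt
  have hmem : i ∈ ({i ∈ s | x i ∉ Z} : Finset ι) := mem_filter.2 ⟨hi, hxi⟩
  have hpos := card_pos.2 ⟨i, hmem⟩
  have others_mem : ∀ j ∈ s.erase i, x j ∈ Z := by
    intro j hj
    obtain ⟨hji, hjs⟩ := mem_erase.1 hj
    by_contra hxj
    exact hji (card_le_one.1 (by lia) j (mem_filter.2 ⟨hjs, hxj⟩) i hmem)
  have t_mem : ∀ j ∈ t, x j ∈ Z := by
    have hempty : ({i ∈ t | x i ∉ Z} : Finset ι) = ∅ := card_eq_zero.1 (by lia)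
    simpa [filter_eq_empty_iff] using hempty
  apply hxi
  rw [← add_sum_erase s x hi, ← eq_sub_iff_add_eq] at hst
  rw [hst]
  exact Z.sub_mem (Z.sum_mem t_mem) (Z.sum_mem others_mem)

theorem eq_zero_of_mem_extremePoints_Icc_inter_ker {ι W : Type*} [Finite ι] [AddCommGroup W]
    [Module ℝ W] {φ : (ι → ℝ) →ₗ[ℝ] W} {a b x d : ι → ℝ}
    (hx : x ∈ (Set.Icc a b ∩ LinearMap.ker φ).extremePoints ℝ) (hd : φ d = 0)
    (hsupp : ∀ i, d i ≠ 0 → x i ∈ Set.Ioo (a i) (b i)) : d = 0 := by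
  obtain ⟨⟨⟨hax, hxb⟩, hφx⟩, hext⟩ := hx
  have line_in_box : ∀ᶠ t : ℝ in nhds 0, ∀ i, x i + t * d i ∈ Set.Icc (a i) (b i) := by
    refine Filter.eventually_all.2 fun i => ?_
    by_cases hdi : d i = 0
    · simp [hdi, hax i, hxb i]
    · have hcont : ContinuousAt (fun t : ℝ => x i + t * d i) 0 := by fun_prop
      exact hcont.eventually_mem (Icc_mem_nhds (by simpa using (hsupp i hdi).1)
        (by simpa using (hsupp i hdi).2))
  obtain ⟨ε, hε, hball⟩ := Metric.eventually_nhds_iff.1 line_in_box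
  have shift_mem : ∀ t : ℝ, |t| < ε → x + t • d ∈ Set.Icc a b ∩ LinearMap.ker φ := by
    intro t ht
    have hbox := hball (y := t) (by simpa using ht)
    refine ⟨⟨fun i => (hbox i).1, fun i => (hbox i).2⟩, ?_⟩
    simpa [hd] using hφx
  have hplus := shift_mem (ε / 2) (by rw [abs_of_pos (by linarith)]; linarith)
  have hminus := shift_mem (-(ε / 2)) (by rw [abs_neg, abs_of_pos (by linarith)]; linarith)
  have hmid : x ∈ openSegment ℝ (x + (ε / 2) • d) (x + (-(ε / 2)) • d) :=
    ⟨1 / 2, 1 / 2, by norm_num, by norm_num, by norm_num, by module⟩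
  have hfix : (ε / 2) • d = 0 := by simpa using hext hplus hminus hmid
  exact (smul_eq_zero.1 hfix).resolve_left (by linarith)

variable {V E : Type*} [DecidableEq V] [Fintype E] {src tgt : E → V}

theorem two_le_edgeDegree_of_netInflow_eq_zero (Z : AddSubgroup ℝ) [DecidablePred (· ∈ Z)]
    {x : E → ℝ} (hx : netInflow src tgt x = 0) {v : V}
    (hv : v ∈ endpoints src tgt {e | x e ∉ Z}) : 2 ≤ edgeDegree src tgt {e | x e ∉ Z} v := by
  have balance : ∑ e with tgt e = v, x e = ∑ e with src e = v, x e :=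
    sub_eq_zero.1 (congrFun hx v)
  simp only [edgeDegree, filter_comm (fun e => x e ∉ Z)]
  simp only [endpoints, mem_union, mem_image, mem_filter_univ] at hv
  rcases hv with ⟨e, he, hev⟩ | ⟨e, he, hev⟩
  · exact two_le_card_notMem_of_sum_eq_sum Z balance.symm ((mem_filter_univ e).2 hev) he
  · rw [add_comm]
    exact two_le_card_notMem_of_sum_eq_sum Z balance ((mem_filter_univ e).2 hev) he

theorem exists_intCast_eq_of_mem_extremePoints_circulations {lo hi : E → ℤ} {x : E → ℝ}
    (hx : x ∈ (Set.Icc (fun e => (lo e : ℝ)) (fun e => (hi e : ℝ)) ∩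
      LinearMap.ker (netInflow src tgt)).extremePoints ℝ) (e : E) :
    ∃ n : ℤ, (n : ℝ) = x e := by
  classical
  let Z : AddSubgroup ℝ := (Int.castAddHom ℝ).range
  by_contra hfrac
  obtain ⟨⟨hlo, hhi⟩, hcirc⟩ := hx.1
  obtain ⟨d, hd0, hdsupp, hdcirc⟩ :=
    exists_ne_zero_netInflow_eq_zero (src := src) (tgt := tgt) (S := {e | x e ∉ Z})
      ⟨e, (mem_filter_univ e).2 hfrac⟩ fun v => two_le_edgeDegree_of_netInflow_eq_zero Z hcirc
  refine hd0 (eq_zero_of_mem_extremePoints_Icc_inter_ker hx hdcirc fun i hdi => ?_)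
  have hxi : x i ∉ Z := (mem_filter_univ i).1 (not_imp_comm.1 (hdsupp i) hdi)
  exact ⟨(hlo i).lt_of_ne fun h => hxi ⟨_, h⟩, (hhi i).lt_of_ne fun h => hxi ⟨_, h.symm⟩⟩

theorem exists_int_circulation {lo hi : E → ℤ} {x : E → ℝ} (hlo : ∀ e, (lo e : ℝ) ≤ x e)
    (hhi : ∀ e, x e ≤ hi e) (hx : netInflow src tgt x = 0) :
    ∃ n : E → ℤ, (∀ e, n e ∈ Set.Icc (lo e) (hi e)) ∧
      netInflow src tgt (fun e => (n e : ℝ)) = 0 := by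
  let P : Set (E → ℝ) :=
    Set.Icc (fun e => (lo e : ℝ)) (fun e => (hi e : ℝ)) ∩ LinearMap.ker (netInflow src tgt)
  have hcompact : IsCompact P :=
    isCompact_Icc.inter_right (Submodule.closed_of_finiteDimensional _)
  obtain ⟨z, hz⟩ := hcompact.extremePoints_nonempty ⟨x, ⟨hlo, hhi⟩, hx⟩
  choose n hn using exists_intCast_eq_of_mem_extremePoints_circulations hz
  obtain ⟨⟨⟨hloz, hhiz⟩, hzcirc⟩, -⟩ := hz
  obtain rfl : (fun e => (n e : ℝ)) = z := funext hn
  exact ⟨n, fun e => ⟨Int.cast_le.1 (hloz e), Int.cast_le.1 (hhiz e)⟩, hzcirc⟩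

end Integrality

section Rounding

variable {F I J : Type*}

/-- The sources of the edges of the assignment network of `g : F → I` and `h : F → J`. The vertices
are `I`, `J`, a source `inl none` and a sink `inr none`. There is an edge from `g u` to `h u` for
each `u : F`, one from the source to each `i : I`, one from each `j : J` to the sink, and one from
the sink to the source. -/
def assignmentSrc (g : F → I) : F ⊕ I ⊕ J ⊕ Unit → Option I ⊕ Option J
  | .inl u => .inl (some (g u))
  | .inr (.inl _) => .inl none
  | .inr (.inr (.inl j)) => .inr (some j)
  | .inr (.inr (.inr _)) => .inr none

/-- The targets of the edges of the assignment network described at `assignmentSrc`. -/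
def assignmentTgt (h : F → J) : F ⊕ I ⊕ J ⊕ Unit → Option I ⊕ Option J
  | .inl u => .inr (some (h u))
  | .inr (.inl i) => .inl (some i)
  | .inr (.inr (.inl _)) => .inr none
  | .inr (.inr (.inr _)) => .inl none

variable [Fintype F] [DecidableEq I] [DecidableEq J]

theorem netInflow_assignment_eq_zero_iff [Fintype I] [Fintype J] {g : F → I} {h : F → J}
    {x : F ⊕ I ⊕ J ⊕ Unit → ℝ} :
    netInflow (assignmentSrc g) (assignmentTgt h) x = 0 ↔
      (∀ i, x (.inr (.inl i)) = ∑ u with g u = i, x (.inl u)) ∧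
      (∀ j, x (.inr (.inr (.inl j))) = ∑ u with h u = j, x (.inl u)) ∧
      x (.inr (.inr (.inr ()))) = ∑ u, x (.inl u) := by
  simp only [funext_iff, Sum.forall, Option.forall, netInflow_apply, sum_filter,
    Fintype.sum_sum_type]
  simp only [assignmentSrc, assignmentTgt, reduceCtorEq, Sum.inl.injEq, Sum.inr.injEq,
    Option.some.injEq, if_true, if_false, sum_const_zero, sum_ite_eq', mem_univ, univ_unique,
    sum_singleton, zero_add, add_zero, Pi.zero_apply, sub_eq_zero, PUnit.default_eq_unit]
  constructor
  · rintro ⟨⟨source, group⟩, -, cell⟩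
    refine ⟨group, fun j => (cell j).symm, ?_⟩
    simp only [source, group, ← sum_filter, sum_fiberwise]
  · rintro ⟨group, cell, total⟩
    refine ⟨⟨?_, group⟩, ?_, fun j => (cell j).symm⟩
    · simp only [total, group, ← sum_filter, sum_fiberwise]
    · simp only [total, cell, ← sum_filter, sum_fiberwise]

theorem sum_eq_card_filter_eq_one {ι : Type*} {s : Finset ι} {n : ι → ℤ}
    (hn : ∀ i ∈ s, n i = 0 ∨ n i = 1) : ∑ i ∈ s, n i = #{i ∈ s | n i = 1} := by
  rw [card_filter, Nat.cast_sum]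
  refine sum_congr rfl fun i hi => ?_
  rcases hn i hi with h | h <;> simp [h]

theorem exists_finset_card_fiber_mem_Icc_floor_ceil [Finite I] [Finite J] (g : F → I) (h : F → J)
    {y : F → ℝ} (hy : ∀ u, y u ∈ Set.Icc 0 1) :
    ∃ C : Finset F, (#C : ℤ) ∈ Set.Icc ⌊∑ u, y u⌋ ⌈∑ u, y u⌉ ∧
      (∀ i, (#{u ∈ C | g u = i} : ℤ) ∈
        Set.Icc ⌊∑ u with g u = i, y u⌋ ⌈∑ u with g u = i, y u⌉) ∧
      ∀ j, (#{u ∈ C | h u = j} : ℤ) ∈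
        Set.Icc ⌊∑ u with h u = j, y u⌋ ⌈∑ u with h u = j, y u⌉ := by
  have := Fintype.ofFinite I
  have := Fintype.ofFinite J
  let x : F ⊕ I ⊕ J ⊕ Unit → ℝ := Sum.elim y <| Sum.elim (fun i => ∑ u with g u = i, y u) <|
    Sum.elim (fun j => ∑ u with h u = j, y u) fun _ => ∑ u, y u
  have hx : netInflow (assignmentSrc g) (assignmentTgt h) x = 0 :=
    netInflow_assignment_eq_zero_iff.2 ⟨fun _ => rfl, fun _ => rfl, rfl⟩
  obtain ⟨n, hbounds, hn⟩ :=
    exists_int_circulation (fun e => Int.floor_le (x e)) (fun e => Int.le_ceil (x e)) hx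
  obtain ⟨hgroup, hcell, htotal⟩ := netInflow_assignment_eq_zero_iff.1 hn
  have n_eq_zero_or_one : ∀ u, n (.inl u) = 0 ∨ n (.inl u) = 1 := by
    intro u
    have hfloor : 0 ≤ n (.inl u) := (Int.floor_nonneg.2 (hy u).1).trans (hbounds (.inl u)).1
    have hceil : n (.inl u) ≤ 1 :=
      (hbounds (.inl u)).2.trans (Int.ceil_le.2 (by exact_mod_cast (hy u).2))
    lia
  have sum_eq_card : ∀ s : Finset F, ∑ u ∈ s, n (.inl u) = #{u ∈ s | n (.inl u) = 1} :=
    fun _ => sum_eq_card_filter_eq_one fun u _ => n_eq_zero_or_one u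
  norm_cast at hgroup hcell htotal
  rw [sum_eq_card] at htotal
  simp only [sum_eq_card] at hgroup hcell
  refine ⟨({u | n (.inl u) = 1} : Finset F), ?_, fun i => ?_, fun j => ?_⟩
  · rw [← htotal]
    exact hbounds _
  · rw [filter_comm, ← hgroup]
    exact hbounds _
  · rw [filter_comm, ← hcell]
    exact hbounds _

end Rounding

section DisjointFamilies

variable {F I J : Type*}

theorem exists_label_eq_some_iff_mem {G : I → Finset F} (hG : Pairwise (Disjoint on G)) :
    ∃ g : F → Option I, ∀ u i, g u = some i ↔ u ∈ G i := by
  suffices label : ∀ u, ∃ o : Option I, ∀ i, o = some i ↔ u ∈ G i from Classical.skolem.1 label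
  intro u
  by_cases hu : ∃ i, u ∈ G i
  · obtain ⟨i, hi⟩ := hu
    refine ⟨some i, fun i' => Option.some_inj.trans ⟨fun h => h ▸ hi, fun hi' => ?_⟩⟩
    exact hG.eq (not_disjoint_iff.2 ⟨u, hi, hi'⟩)
  · exact ⟨none, fun i => iff_of_false (Option.some_ne_none i).symm fun hi => hu ⟨i, hi⟩⟩

variable [Fintype F] [DecidableEq F] [Finite I] [Finite J]

theorem exists_finset_card_inter_mem_Icc_floor_ceil {G : I → Finset F} {S : J → Finset F}
    (hG : Pairwise (Disjoint on G)) (hS : Pairwise (Disjoint on S)) {y : F → ℝ}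
    (hy : ∀ u, y u ∈ Set.Icc 0 1) :
    ∃ C : Finset F, (#C : ℤ) ∈ Set.Icc ⌊∑ u, y u⌋ ⌈∑ u, y u⌉ ∧
      (∀ i, (#(C ∩ G i) : ℤ) ∈ Set.Icc ⌊∑ u ∈ G i, y u⌋ ⌈∑ u ∈ G i, y u⌉) ∧
      ∀ j, (#(C ∩ S j) : ℤ) ∈ Set.Icc ⌊∑ u ∈ S j, y u⌋ ⌈∑ u ∈ S j, y u⌉ := by
  classical
  obtain ⟨g, hg⟩ := exists_label_eq_some_iff_mem hG
  obtain ⟨h, hh⟩ := exists_label_eq_some_iff_mem hS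
  obtain ⟨C, htotal, hgroup, hcell⟩ := exists_finset_card_fiber_mem_Icc_floor_ceil g h hy
  refine ⟨C, htotal, fun i => ?_, fun j => ?_⟩
  · simpa [hg, filter_mem_eq_inter] using hgroup (some i)
  · simpa [hh, filter_mem_eq_inter] using hcell (some j)

theorem stmt9_general {G : I → Finset F} (hG : Pairwise (Disjoint on G)) {S : J → Finset F}
    (hS : Pairwise (Disjoint on S)) {k : ℕ} {α β : I → ℕ} {y : F → ℝ}
    (hy : ∀ u, y u ∈ Set.Icc 0 1) (hk : ∑ u, y u = k)
    (hαβ : ∀ i, (α i : ℝ) ≤ ∑ u ∈ G i, y u ∧ ∑ u ∈ G i, y u ≤ β i)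
    (hcover : ∀ j, 1 ≤ ∑ u ∈ S j, y u) :
    ∃ C : Finset F, #C = k ∧ (∀ j, (C ∩ S j).Nonempty) ∧
      ∀ i, α i ≤ #(C ∩ G i) ∧ #(C ∩ G i) ≤ β i := by
  obtain ⟨C, htotal, hgroup, hcell⟩ := exists_finset_card_inter_mem_Icc_floor_ceil hG hS hy
  refine ⟨C, ?_, fun j => card_pos.1 ?_, fun i => ⟨?_, ?_⟩⟩
  · simpa [hk] using htotal
  · have hfloor : (1 : ℤ) ≤ ⌊∑ u ∈ S j, y u⌋ := Int.le_floor.2 (by simpa using hcover j)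
    exact_mod_cast hfloor.trans (hcell j).1
  · have hfloor : (α i : ℤ) ≤ ⌊∑ u ∈ G i, y u⌋ := Int.le_floor.2 (by simpa using (hαβ i).1)
    exact_mod_cast hfloor.trans (hgroup i).1
  · have hceil : ⌈∑ u ∈ G i, y u⌉ ≤ (β i : ℤ) := Int.ceil_le.2 (by simpa using (hαβ i).2)
    exact_mod_cast (hgroup i).2.trans hceil

end DisjointFamilies

theorem stmt9 {F : Type*} [Fintype F] [DecidableEq F] (ℓ L k : ℕ)
    (G : Fin ℓ → Finset F) (hGdisj : ∀ i j : Fin ℓ, i ≠ j → Disjoint (G i) (G j))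
    (hGcover : ∀ u : F, ∃ i, u ∈ G i)
    (S : Fin L → Finset F) (hSdisj : ∀ i j : Fin L, i ≠ j → Disjoint (S i) (S j))
    (α β : Fin ℓ → ℕ)
    (hy : ∃ y : F → ℝ, (∀ u, 0 ≤ y u) ∧ (∀ u, y u ≤ 1) ∧ (∑ u, y u = (k : ℝ)) ∧
      (∀ i, (α i : ℝ) ≤ ∑ u ∈ G i, y u ∧ ∑ u ∈ G i, y u ≤ (β i : ℝ)) ∧
      (∀ j, 1 ≤ ∑ u ∈ S j, y u)) :
    ∃ C : Finset F, C.card = k ∧ (∀ j, (C ∩ S j).Nonempty) ∧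
      (∀ i, α i ≤ (C ∩ G i).card ∧ (C ∩ G i).card ≤ β i) := by
  obtain ⟨y, hy0, hy1, hk, hαβ, hcover⟩ := hy
  exact stmt9_general hGdisj hSdisj (fun u => ⟨hy0 u, hy1 u⟩) hk hαβ hcover
end

section
/- Let (P,d) be a finite metric space, let p ≥ 1 be a real number, let w : P → ℝ be nonnegative demands, let P_1, …, P_ℓ be pairwise disjoint subsets of P whose union is P, and let k, α_1, …, α_ℓ, β_1, …, β_ℓ be natural numbers. Call C ⊆ P feasible if |C| = k and α_i ≤ |C ∩ P_i| ≤ β_i for every i; for nonempty C define cost(C) := ∑_{v∈P} w(v)·d(v,C)^p where d(v,C) := min_{c∈C} d(v,c). Let D ⊆ P be nonempty, let nn : P → D satisfy d(v, nn(v)) = d(v,D) for every v ∈ P, and define cost_rdc(X) := ∑_{v∈P} w(v)·d(nn(v), X)^p for nonempty X ⊆ P. Let α, β ≥ 1 be real numbers. Suppose that cost over D satisfies ∑_{v∈P} w(v)·d(v,D)^p ≤ α^p·cost(C) for every feasible C, and that S is a feasible set with cost_rdc(S) ≤ β^p·cost_rdc(C) for every feasible C. Then for every feasible C, cost(S) ≤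 2^{p-1}·(α^p + β^p·2^{p-1}·(α^p + 1))·cost(C). -/
open Metric

/-!
Moving each client `x i` to a new location `y i` changes its distance to any set of centers by at
most `dist (x i) (y i)`, so convexity of `t ↦ t ^ p` bounds the cost at either placement by
`2 ^ (p - 1)` times the sum of the relocation cost and the cost at the other placement. Apply this
to pass from the original clients to the relocated ones at `S`, compare `S` with `C` on the
relocated clients, and apply it again to come back to the original clients at `C`.
-/

theorem rpow_add_le_two_rpow_mul_rpow_add_rpow {p a b : ℝ} (hp : 1 ≤ p) (ha : 0 ≤ a)
    (hb : 0 ≤ b) : (a + b) ^ p ≤ 2 ^ (p - 1) * (a ^ p + b ^ p) := by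
  lift a to NNReal using ha
  lift b to NNReal using hb
  exact_mod_cast NNReal.rpow_add_le_mul_rpow_add_rpow a b hp

theorem infDist_rpow_le_dist_rpow_add_infDist_rpow {X : Type*} [PseudoMetricSpace X] {p : ℝ}
    (hp : 1 ≤ p) (x y : X) (C : Set X) :
    infDist x C ^ p ≤ 2 ^ (p - 1) * (dist x y ^ p + infDist y C ^ p) :=
  calc infDist x C ^ p ≤ (dist x y + infDist y C) ^ p :=
        Real.rpow_le_rpow infDist_nonneg
          (infDist_le_infDist_add_dist.trans_eq (add_comm _ _)) (by positivity)
    _ ≤ 2 ^ (p - 1) * (dist x y ^ p + infDist y C ^ p) :=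
        rpow_add_le_two_rpow_mul_rpow_add_rpow hp dist_nonneg infDist_nonneg

section Cost

variable {ι X : Type*} [PseudoMetricSpace X]

/-- The `ℓ_p^p` clustering cost of a set `C` of centers for the clients `i ∈ s` with demands `w i`
located at `x i`. Keeping locations separate from clients lets the reduced instance be the same
clients at other locations. Since `infDist x ∅ = 0`, the empty set has cost `0` for `p ≠ 0`. -/
noncomputable def clusterCost (p : ℝ) (s : Finset ι) (w : ι → ℝ) (x : ι → X) (C : Set X) : ℝ :=
  ∑ i ∈ s, w i * infDist (x i) C ^ p

/-- The `ℓ_p^p` cost of moving each client `i ∈ s` with demand `w i` from `x i` to `y i`, the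
price of replacing the original instance by the reduced one. -/
noncomputable def relocationCost (p : ℝ) (s : Finset ι) (w : ι → ℝ) (x y : ι → X) : ℝ :=
  ∑ i ∈ s, w i * dist (x i) (y i) ^ p

theorem relocationCost_comm (p : ℝ) (s : Finset ι) (w : ι → ℝ) (x y : ι → X) :
    relocationCost p s w x y = relocationCost p s w y x := by
  simp only [relocationCost, dist_comm]

theorem relocationCost_eq_clusterCost (p : ℝ) {s : Finset ι} (w : ι → ℝ) {x y : ι → X} {D : Set X}
    (hy : ∀ i ∈ s, dist (x i) (y i) = infDist (x i) D) :
    relocationCost p s w x y = clusterCost p s w x D :=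
  Finset.sum_congr rfl fun i hi => by rw [hy i hi]

variable {p : ℝ} {s : Finset ι} {w : ι → ℝ}

theorem clusterCost_le_relocationCost_add_clusterCost (hp : 1 ≤ p) (hw : ∀ i ∈ s, 0 ≤ w i)
    (x y : ι → X) (C : Set X) :
    clusterCost p s w x C ≤
      2 ^ (p - 1) * (relocationCost p s w x y + clusterCost p s w y C) :=
  calc clusterCost p s w x C
    _ ≤ ∑ i ∈ s, w i * (2 ^ (p - 1) * (dist (x i) (y i) ^ p + infDist (y i) C ^ p)) :=
        Finset.sum_le_sum fun i hi => mul_le_mul_of_nonneg_left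
          (infDist_rpow_le_dist_rpow_add_infDist_rpow hp (x i) (y i) C) (hw i hi)
    _ = 2 ^ (p - 1) * (relocationCost p s w x y + clusterCost p s w y C) := by
        simp only [relocationCost, clusterCost, ← Finset.sum_add_distrib, Finset.mul_sum]
        exact Finset.sum_congr rfl fun i _ => by ring

variable {x y : ι → X} {S C : Set X} {A B : ℝ}

theorem clusterCost_relocated_le (hp : 1 ≤ p) (hw : ∀ i ∈ s, 0 ≤ w i)
    (hxy : relocationCost p s w x y ≤ A * clusterCost p s w x C) :
    clusterCost p s w y C ≤ 2 ^ (p - 1) * (A + 1) * clusterCost p s w x C :=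
  calc clusterCost p s w y C
    _ ≤ 2 ^ (p - 1) * (relocationCost p s w x y + clusterCost p s w x C) :=
        relocationCost_comm p s w x y ▸
          clusterCost_le_relocationCost_add_clusterCost hp hw y x C
    _ ≤ 2 ^ (p - 1) * (A * clusterCost p s w x C + clusterCost p s w x C) := by gcongr
    _ = 2 ^ (p - 1) * (A + 1) * clusterCost p s w x C := by ring

theorem stmt10_general (hp : 1 ≤ p) (hw : ∀ i ∈ s, 0 ≤ w i) (hB : 0 ≤ B)
    (hxy : relocationCost p s w x y ≤ A * clusterCost p s w x C)
    (hS : clusterCost p s w y S ≤ B * clusterCost p s w y C) :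
    clusterCost p s w x S ≤
      2 ^ (p - 1) * (A + B * 2 ^ (p - 1) * (A + 1)) * clusterCost p s w x C :=
  calc clusterCost p s w x S
    _ ≤ 2 ^ (p - 1) * (relocationCost p s w x y + clusterCost p s w y S) :=
        clusterCost_le_relocationCost_add_clusterCost hp hw x y S
    _ ≤ 2 ^ (p - 1) * (A * clusterCost p s w x C + B * clusterCost p s w y C) := by gcongr
    _ ≤ 2 ^ (p - 1) * (A * clusterCost p s w x C +
          B * (2 ^ (p - 1) * (A + 1) * clusterCost p s w x C)) := by
        gcongr
        exact clusterCost_relocated_le hp hw hxy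
    _ = 2 ^ (p - 1) * (A + B * 2 ^ (p - 1) * (A + 1)) * clusterCost p s w x C := by ring

end Cost

theorem stmt10 {M : Type*} [MetricSpace M] [Fintype M] [DecidableEq M]
    (p : ℝ) (hp : 1 ≤ p)
    (w : M → ℝ) (hw : ∀ v, 0 ≤ w v)
    (ℓ : ℕ) (P : Fin ℓ → Finset M)
    (hPdisj : ∀ i j : Fin ℓ, i ≠ j → Disjoint (P i) (P j))
    (hPcover : ∀ v : M, ∃ i, v ∈ P i)
    (k : ℕ) (a b : Fin ℓ → ℕ)
    (D : Finset M) (hD : D.Nonempty)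
    (nn : M → M) (hnnD : ∀ v, nn v ∈ D)
    (hnn : ∀ v, dist v (nn v) = infDist v (D : Set M))
    (α β : ℝ) (hα : 1 ≤ α) (hβ : 1 ≤ β)
    (S : Finset M)
    (hSfeas : S.card = k ∧ ∀ i, a i ≤ (S ∩ P i).card ∧ (S ∩ P i).card ≤ b i)
    (hDapx : ∀ C : Finset M,
      (C.card = k ∧ ∀ i, a i ≤ (C ∩ P i).card ∧ (C ∩ P i).card ≤ b i) →
      ∑ v, w v * infDist v (D : Set M) ^ p ≤
        α ^ p * ∑ v, w v * infDist v (C : Set M) ^ p)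
    (hSapx : ∀ C : Finset M,
      (C.card = k ∧ ∀ i, a i ≤ (C ∩ P i).card ∧ (C ∩ P i).card ≤ b i) →
      ∑ v, w v * infDist (nn v) (S : Set M) ^ p ≤
        β ^ p * ∑ v, w v * infDist (nn v) (C : Set M) ^ p) :
    ∀ C : Finset M,
      (C.card = k ∧ ∀ i, a i ≤ (C ∩ P i).card ∧ (C ∩ P i).card ≤ b i) →
      ∑ v, w v * infDist v (S : Set M) ^ p ≤
        2 ^ (p - 1) * (α ^ p + β ^ p * 2 ^ (p - 1) * (α ^ p + 1)) *
          ∑ v, w v * infDist v (C : Set M) ^ p :=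
  fun C hC => stmt10_general hp (fun v _ => hw v) (by positivity)
    ((relocationCost_eq_clusterCost p w fun v _ => hnn v).trans_le (hDapx C hC)) (hSapx C hC)
end

section
/- Let (M,d) be a metric space, let P ⊆ M be finite, let w : P → ℝ be nonnegative, and let p ≥ 1 be a real number. Let D, X ⊆ M be finite and nonempty, and let nn : P → D satisfy d(v, nn(v)) = min_{q∈D} d(v,q) for every v ∈ P. Then ∑_{v∈P} w(v)·d(v, X)^p ≤ 2^{p-1}·(∑_{v∈P} w(v)·d(v,D)^p + ∑_{v∈P} w(v)·d(nn(v), X)^p), where d(v,Y) := min_{y∈Y} d(v,y). -/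
open Metric

theorem rpow_add_le_mul_rpow_add_rpow_of_nonneg {a b p : ℝ} (ha : 0 ≤ a) (hb : 0 ≤ b)
    (hp : 1 ≤ p) : (a + b) ^ p ≤ 2 ^ (p - 1) * (a ^ p + b ^ p) := by
  lift a to NNReal using ha
  lift b to NNReal using hb
  exact_mod_cast NNReal.rpow_add_le_mul_rpow_add_rpow a b hp

section PseudoMetricSpace

variable {M : Type*} [PseudoMetricSpace M] {p : ℝ}

theorem infDist_rpow_le_mul_dist_rpow_add_infDist_rpow (hp : 1 ≤ p) (x y : M) (s : Set M) :
    infDist x s ^ p ≤ 2 ^ (p - 1) * (dist x y ^ p + infDist y s ^ p) :=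
  calc
    infDist x s ^ p ≤ (dist x y + infDist y s) ^ p := by
      gcongr
      · exact infDist_nonneg
      · exact infDist_le_infDist_add_dist.trans_eq (add_comm _ _)
    _ ≤ 2 ^ (p - 1) * (dist x y ^ p + infDist y s ^ p) :=
      rpow_add_le_mul_rpow_add_rpow_of_nonneg dist_nonneg infDist_nonneg hp

theorem stmt12_general {ι : Type*} (hp : 1 ≤ p) (P : Finset ι) {w : ι → ℝ}
    (hw : ∀ i ∈ P, 0 ≤ w i) (x y : ι → M) {X : Set M} (_hX : X.Nonempty) :
    ∑ i ∈ P, w i * infDist (x i) X ^ p ≤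
      2 ^ (p - 1) * (∑ i ∈ P, w i * dist (x i) (y i) ^ p +
        ∑ i ∈ P, w i * infDist (y i) X ^ p) :=
  calc
    ∑ i ∈ P, w i * infDist (x i) X ^ p
      ≤ ∑ i ∈ P, w i * (2 ^ (p - 1) * (dist (x i) (y i) ^ p + infDist (y i) X ^ p)) := by
        gcongr with i hi
        · exact hw i hi
        · exact infDist_rpow_le_mul_dist_rpow_add_infDist_rpow hp (x i) (y i) X
    _ = 2 ^ (p - 1) * (∑ i ∈ P, w i * dist (x i) (y i) ^ p +
          ∑ i ∈ P, w i * infDist (y i) X ^ p) := by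
        simp only [mul_left_comm (w _), mul_add, Finset.sum_add_distrib, Finset.mul_sum]

end PseudoMetricSpace

theorem stmt12 {M : Type*} [MetricSpace M] (p : ℝ) (hp : 1 ≤ p)
    (P : Finset M) (w : M → ℝ) (hw : ∀ v ∈ P, 0 ≤ w v)
    (D X : Finset M) (hD : D.Nonempty) (hX : X.Nonempty)
    (nn : M → M) (hnnD : ∀ v ∈ P, nn v ∈ D)
    (hnn : ∀ v ∈ P, dist v (nn v) = infDist v (D : Set M)) :
    ∑ v ∈ P, w v * infDist v (X : Set M) ^ p ≤
      2 ^ (p - 1) * (∑ v ∈ P, w v * infDist v (D : Set M) ^ p +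
        ∑ v ∈ P, w v * infDist (nn v) (X : Set M) ^ p) := by
  rw [← Finset.sum_congr rfl fun v hv => congrArg (w v * · ^ p) (hnn v hv)]
  exact stmt12_general hp P hw id nn hX
end

section
/- Let F be a finite set, let P ⊆ F, let p ≥ 1 and δ ≥ 0 be real numbers, and let x, y, d : F → ℝ be nonnegative functions. Assume: ∑_{u∈F} x_u = 1; x_u = y_u for every u ∈ P; and d_u ≥ δ/2 for every u ∉ P with x_u > 0. Then ∑_{u∈F} d_u^p · x_u ≥ 2^{-p}·((1 − ∑_{u∈P} y_u)·δ^p + ∑_{u∈P} d_u^p · y_u). -/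
theorem mul_sum_le_sum_mul_of_le_of_pos {ι R : Type*}
    [Semiring R] [PartialOrder R] [IsOrderedRing R] {s : Finset ι} {a : R} {f w : ι → R}
    (hw : ∀ i ∈ s, 0 ≤ w i) (hf : ∀ i ∈ s, 0 < w i → a ≤ f i) :
    a * ∑ i ∈ s, w i ≤ ∑ i ∈ s, f i * w i := by
  rw [Finset.mul_sum]
  refine Finset.sum_le_sum fun i hi => ?_
  rcases (hw i hi).eq_or_lt with hzero | hpos
  · simp [← hzero]
  · exact mul_le_mul_of_nonneg_right (hf i hi hpos) hpos.le

theorem rpow_neg_mul_rpow_eq_div_rpow {c δ : ℝ} (hc : 0 ≤ c) (hδ : 0 ≤ δ) (p : ℝ) :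
    c ^ (-p) * δ ^ p = (δ / c) ^ p := by
  rw [Real.div_rpow hδ hc, Real.rpow_neg hc, inv_mul_eq_div]

theorem stmt14_general {F : Type*} {s P : Finset F} (hPs : P ⊆ s)
    {c p δ : ℝ} (hc : 1 ≤ c) (hp : 0 ≤ p) (hδ : 0 ≤ δ)
    {x y d : F → ℝ} (hx : ∀ u ∈ s, 0 ≤ x u) (hd : ∀ u ∈ P, 0 ≤ d u)
    (hxy : ∀ u ∈ P, x u = y u)
    (hfar : ∀ u ∈ s, u ∉ P → 0 < x u → δ / c ≤ d u) :
    c ^ (-p) * ((∑ u ∈ s, x u - ∑ u ∈ P, y u) * δ ^ p + ∑ u ∈ P, d u ^ p * y u) ≤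
      ∑ u ∈ s, d u ^ p * x u := by
  classical
  have hc₀ : 0 ≤ c := zero_le_one.trans hc
  have mass_outside : ∑ u ∈ s, x u - ∑ u ∈ P, y u = ∑ u ∈ s \ P, x u := by
    rw [← Finset.sum_congr rfl hxy, Finset.sum_sdiff_eq_sub hPs]
  have cost_inside : ∑ u ∈ P, d u ^ p * y u = ∑ u ∈ P, d u ^ p * x u :=
    Finset.sum_congr rfl fun u hu => by rw [hxy u hu]
  have outside_le : (δ / c) ^ p * ∑ u ∈ s \ P, x u ≤ ∑ u ∈ s \ P, d u ^ p * x u := by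
    refine mul_sum_le_sum_mul_of_le_of_pos (fun u hu => hx u (Finset.sdiff_subset hu)) ?_
    intro u hu hxu
    obtain ⟨hus, huP⟩ := Finset.mem_sdiff.mp hu
    exact Real.rpow_le_rpow (div_nonneg hδ hc₀) (hfar u hus huP hxu) hp
  have inside_le : c ^ (-p) * ∑ u ∈ P, d u ^ p * x u ≤ ∑ u ∈ P, d u ^ p * x u :=
    mul_le_of_le_one_left
      (Finset.sum_nonneg fun u hu => mul_nonneg (Real.rpow_nonneg (hd u hu) p) (hx u (hPs hu)))
      (Real.rpow_le_one_of_one_le_of_nonpos hc (neg_nonpos.mpr hp))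
  calc c ^ (-p) * ((∑ u ∈ s, x u - ∑ u ∈ P, y u) * δ ^ p + ∑ u ∈ P, d u ^ p * y u)
      = (δ / c) ^ p * ∑ u ∈ s \ P, x u + c ^ (-p) * ∑ u ∈ P, d u ^ p * x u := by
        rw [mass_outside, cost_inside, ← rpow_neg_mul_rpow_eq_div_rpow hc₀ hδ]
        ring
    _ ≤ ∑ u ∈ s \ P, d u ^ p * x u + ∑ u ∈ P, d u ^ p * x u := add_le_add outside_le inside_le
    _ = ∑ u ∈ s, d u ^ p * x u := Finset.sum_sdiff hPs

theorem stmt14 {F : Type*} [Fintype F] (P : Finset F)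
    (p δ : ℝ) (hp : 1 ≤ p) (hδ : 0 ≤ δ)
    (x y d : F → ℝ) (hx : ∀ u, 0 ≤ x u) (hy : ∀ u, 0 ≤ y u) (hd : ∀ u, 0 ≤ d u)
    (hxsum : ∑ u, x u = 1)
    (hxy : ∀ u ∈ P, x u = y u)
    (hfar : ∀ u ∉ P, 0 < x u → δ / 2 ≤ d u) :
    2 ^ (-p) * ((1 - ∑ u ∈ P, y u) * δ ^ p + ∑ u ∈ P, d u ^ p * y u) ≤
      ∑ u, d u ^ p * x u := by
  rw [← hxsum]
  exact stmt14_general P.subset_univ one_le_two (zero_le_one.trans hp) hδ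
    (fun u _ => hx u) (fun u _ => hd u) hxy (fun u _ => hfar u)
end

section
/- Let F be a finite set, let P ⊆ F, let p ≥ 1 and δ ≥ 0 be real numbers, and let x, y, d : F → ℝ be nonnegative functions. Assume: ∑_{u∈F} x_u = 1; x_u = y_u for every u ∈ P; and d_u ≤ (3/2)·δ for every u ∉ P with x_u > 0. Then ∑_{u∈F} d_u^p · x_u ≤ (3/2)^p·((1 − ∑_{u∈P} y_u)·δ^p + ∑_{u∈P} d_u^p · y_u). -/
theorem sum_mul_le_mul_sum_of_le_of_pos {ι R : Type*} [Semiring R] [PartialOrder R]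
    [IsOrderedRing R] {s : Finset ι} {f w : ι → R} {C : R} (hw : ∀ i ∈ s, 0 ≤ w i)
    (hf : ∀ i ∈ s, 0 < w i → f i ≤ C) :
    ∑ i ∈ s, f i * w i ≤ C * ∑ i ∈ s, w i := by
  rw [Finset.mul_sum]
  refine Finset.sum_le_sum fun i hi => ?_
  rcases (hw i hi).eq_or_lt with w_zero | w_pos
  · simp [← w_zero]
  · exact mul_le_mul_of_nonneg_right (hf i hi w_pos) w_pos.le

theorem sum_rpow_mul_le_of_le_mul_of_pos {ι : Type*} {s : Finset ι} {c p δ : ℝ} {d w : ι → ℝ}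
    (hc : 0 ≤ c) (hp : 0 ≤ p) (hδ : 0 ≤ δ) (hw : ∀ i ∈ s, 0 ≤ w i) (hd : ∀ i ∈ s, 0 ≤ d i)
    (hdδ : ∀ i ∈ s, 0 < w i → d i ≤ c * δ) :
    ∑ i ∈ s, d i ^ p * w i ≤ c ^ p * ((∑ i ∈ s, w i) * δ ^ p) :=
  calc ∑ i ∈ s, d i ^ p * w i
    _ ≤ (c * δ) ^ p * ∑ i ∈ s, w i :=
      sum_mul_le_mul_sum_of_le_of_pos hw fun i hi w_pos =>
        Real.rpow_le_rpow (hd i hi) (hdδ i hi w_pos) hp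
    _ = c ^ p * ((∑ i ∈ s, w i) * δ ^ p) := by
      rw [Real.mul_rpow hc hδ, mul_assoc, mul_comm (δ ^ p)]

theorem stmt15_general {F : Type*} {s P : Finset F} (hPs : P ⊆ s) {c p δ : ℝ}
    (hc : 1 ≤ c) (hp : 0 ≤ p) (hδ : 0 ≤ δ) {x y d : F → ℝ}
    (hx : ∀ u ∈ s, 0 ≤ x u) (hd : ∀ u ∈ s, 0 ≤ d u) (hxsum : ∑ u ∈ s, x u = 1)
    (hxy : ∀ u ∈ P, x u = y u) (hnear : ∀ u ∈ s, u ∉ P → 0 < x u → d u ≤ c * δ) :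
    ∑ u ∈ s, d u ^ p * x u ≤
      c ^ p * ((1 - ∑ u ∈ P, y u) * δ ^ p + ∑ u ∈ P, d u ^ p * y u) := by
  classical
  have mass_outside : ∑ u ∈ s \ P, x u = 1 - ∑ u ∈ P, y u := by
    rw [← Finset.sum_congr rfl hxy, ← hxsum, Finset.sum_sdiff_eq_sub hPs]
  have cost_outside :
      ∑ u ∈ s \ P, d u ^ p * x u ≤ c ^ p * ((1 - ∑ u ∈ P, y u) * δ ^ p) := by
    have mem_s {u : F} (hu : u ∈ s \ P) : u ∈ s := (Finset.mem_sdiff.mp hu).1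
    rw [← mass_outside]
    exact sum_rpow_mul_le_of_le_mul_of_pos (zero_le_one.trans hc) hp hδ
      (fun u hu => hx u (mem_s hu)) (fun u hu => hd u (mem_s hu))
      (fun u hu => hnear u (mem_s hu) (Finset.mem_sdiff.mp hu).2)
  have cost_inside : ∑ u ∈ P, d u ^ p * x u ≤ c ^ p * ∑ u ∈ P, d u ^ p * y u := by
    rw [← Finset.sum_congr rfl fun u hu => congrArg (d u ^ p * ·) (hxy u hu)]
    exact le_mul_of_one_le_left
      (Finset.sum_nonneg fun u hu =>
        mul_nonneg (Real.rpow_nonneg (hd u (hPs hu)) p) (hx u (hPs hu)))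
      (Real.one_le_rpow hc hp)
  rw [← Finset.sum_sdiff hPs, mul_add]
  exact add_le_add cost_outside cost_inside

theorem stmt15 {F : Type*} [Fintype F] (P : Finset F)
    (p δ : ℝ) (hp : 1 ≤ p) (hδ : 0 ≤ δ)
    (x y d : F → ℝ) (hx : ∀ u, 0 ≤ x u) (hy : ∀ u, 0 ≤ y u) (hd : ∀ u, 0 ≤ d u)
    (hxsum : ∑ u, x u = 1)
    (hxy : ∀ u ∈ P, x u = y u)
    (hnear : ∀ u ∉ P, 0 < x u → d u ≤ (3 / 2) * δ) :
    ∑ u, d u ^ p * x u ≤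
      (3 / 2) ^ p * ((1 - ∑ u ∈ P, y u) * δ ^ p + ∑ u ∈ P, d u ^ p * y u) :=
  stmt15_general P.subset_univ (by norm_num) (zero_le_one.trans hp) hδ
    (fun u _ => hx u) (fun u _ => hd u) hxsum hxy (fun u _ => hnear u)
end

section
/- Let (M,d) be a metric space, let p ≥ 1 be a real number, let F ⊆ M be finite, and let D' ⊆ M be finite with |D'| ≥ 2. Let R : D' → ℝ be nonnegative and assume the well-separatedness condition: for all distinct v, v̄ ∈ D', d(v,v̄) ≥ 2^{1+1/p}·max(R(v), R(v̄)). For v ∈ D' define B(v) := {u ∈ F : d(v,u) ≤ 2^{1/p}·R(v)}, and let {P(v)}_{v∈D'} be pairwise disjoint subsets of F with B(v) ⊆ P(v) for every v. Let w : D' → ℝ be nonnegative, and for each v ∈ D' let v' ∈ D' \ {v} satisfy d(v,v') = min_{q∈D', q≠v} d(v,q); define Δ_y(v) := (1 − ∑_{u∈P(v)} y_u)·d(v,v')^p + ∑_{u∈P(v)} d(v,u)^p·y_u. Then for every nonnegative y : F → ℝ satisfying ∑_{u∈B(v)} y_u ≥ 1/2 and ∑_{u∈P(v)} y_u ≤ 1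 for all v ∈ D', there exists a nonnegative x : D' × F → ℝ such that for every v ∈ D': ∑_{u∈F} x(v,u) = 1 and x(v,u) ≤ y_u for every u ∈ F, and moreover ∑_{v∈D'} w(v)·∑_{u∈F} d(v,u)^p·x(v,u) ≤ (3/2)^p·∑_{v∈D'} w(v)·Δ_y(v). -/
/-!
Each location `v` first takes all the opening `y` offers in its super ball `P v`. What is missing,
at most `1 / 2`, is taken from the ball `B (nn v)` of its nearest other location in proportion to
`y`; that ball carries mass at least `1 / 2` and is disjoint from `P v`, so `y` is never exceeded.
The radius of `B (nn v)` is at most half of `dist v (nn v)`, so the borrowed mass travels at most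
`3 / 2 * dist v (nn v)`, while the mass taken in `P v` is paid for exactly.
-/

section TopUp

variable {α 𝕜 : Type*} [Field 𝕜]

/-- The assignment of one unit of demand that uses `y` fully on `P` and tops it up to total mass
`1` by a multiple of `y` on `B`. If `∑ u ∈ B, y u = 0`, the division returns `0` and nothing is
added on `B`. -/
noncomputable def topUp (P B : Finset α) (y : α → 𝕜) : α → 𝕜 :=
  (P : Set α).indicator y +
    ((1 - ∑ u ∈ P, y u) / ∑ u ∈ B, y u) • (B : Set α).indicator y

variable {P B F : Finset α} {y : α → 𝕜}

theorem sum_mul_topUp (hPF : P ⊆ F) (hBF : B ⊆ F) (g : α → 𝕜) :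
    ∑ u ∈ F, g u * topUp P B y u =
      ∑ u ∈ P, g u * y u + (1 - ∑ u ∈ P, y u) / (∑ u ∈ B, y u) * ∑ u ∈ B, g u * y u := by
  have sum_mul_indicator {S : Finset α} (hSF : S ⊆ F) :
      ∑ u ∈ F, g u * (S : Set α).indicator y u = ∑ u ∈ S, g u * y u := by
    simp only [← Set.indicator_mul_right]
    exact Finset.sum_indicator_subset (fun u ↦ g u * y u) hSF
  simp only [topUp, Pi.add_apply, Pi.smul_apply, smul_eq_mul, mul_add, mul_left_comm (g _),
    Finset.sum_add_distrib, ← Finset.mul_sum, sum_mul_indicator hPF, sum_mul_indicator hBF]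

theorem sum_topUp (hPF : P ⊆ F) (hBF : B ⊆ F) (hB : ∑ u ∈ B, y u ≠ 0) :
    ∑ u ∈ F, topUp P B y u = 1 := by
  simpa only [one_mul, div_mul_cancel₀ _ hB, add_sub_cancel] using
    sum_mul_topUp hPF hBF (fun _ ↦ 1) (y := y)

variable [LinearOrder 𝕜] [IsStrictOrderedRing 𝕜]

theorem topUp_nonneg {u : α} (hyu : 0 ≤ y u) (hP : ∑ u ∈ P, y u ≤ 1) (hB : 0 ≤ ∑ u ∈ B, y u) :
    0 ≤ topUp P B y u :=
  add_nonneg (Set.indicator_apply_nonneg fun _ ↦ hyu)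
    (mul_nonneg (div_nonneg (sub_nonneg.2 hP) hB) (Set.indicator_apply_nonneg fun _ ↦ hyu))

theorem topUp_le {u : α} (hyu : 0 ≤ y u) (hPB : Disjoint P B) (hB : 0 ≤ ∑ u ∈ B, y u)
    (hmass : 1 ≤ ∑ u ∈ P, y u + ∑ u ∈ B, y u) : topUp P B y u ≤ y u := by
  have hratio : (1 - ∑ u ∈ P, y u) / ∑ u ∈ B, y u ≤ 1 :=
    div_le_one_of_le₀ (sub_le_iff_le_add'.2 hmass) hB
  by_cases huP : u ∈ P
  · have huB : u ∉ B := Finset.disjoint_left.1 hPB huP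
    simp [topUp, huP, huB]
  · by_cases huB : u ∈ B
    · simpa [topUp, huP, huB] using mul_le_of_le_one_left hyu hratio
    · simpa [topUp, huP, huB] using hyu

theorem sum_mul_topUp_le {g : α → 𝕜} {C : 𝕜} (hPF : P ⊆ F) (hBF : B ⊆ F)
    (hy : ∀ u ∈ B, 0 ≤ y u) (hP : ∑ u ∈ P, y u ≤ 1) (hB : 0 < ∑ u ∈ B, y u)
    (hg : ∀ u ∈ B, g u ≤ C) :
    ∑ u ∈ F, g u * topUp P B y u ≤ ∑ u ∈ P, g u * y u + (1 - ∑ u ∈ P, y u) * C := by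
  have hgB : ∑ u ∈ B, g u * y u ≤ C * ∑ u ∈ B, y u := by
    rw [Finset.mul_sum]
    exact Finset.sum_le_sum fun u hu ↦ mul_le_mul_of_nonneg_right (hg u hu) (hy u hu)
  have hratio : 0 ≤ (1 - ∑ u ∈ P, y u) / ∑ u ∈ B, y u := div_nonneg (sub_nonneg.2 hP) hB.le
  calc ∑ u ∈ F, g u * topUp P B y u
      = ∑ u ∈ P, g u * y u + (1 - ∑ u ∈ P, y u) / (∑ u ∈ B, y u) * ∑ u ∈ B, g u * y u :=
        sum_mul_topUp hPF hBF g
    _ ≤ ∑ u ∈ P, g u * y u + (1 - ∑ u ∈ P, y u) / (∑ u ∈ B, y u) * (C * ∑ u ∈ B, y u) :=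
        add_le_add le_rfl (mul_le_mul_of_nonneg_left hgB hratio)
    _ = ∑ u ∈ P, g u * y u + (1 - ∑ u ∈ P, y u) * C := by
        field_simp

end TopUp

section Metric

variable {M : Type*} [PseudoMetricSpace M]

theorem dist_le_three_halves_mul_dist {v q u : M} {r : ℝ} (hu : dist q u ≤ r)
    (hr : 2 * r ≤ dist v q) : dist v u ≤ 3 / 2 * dist v q := by
  linarith [dist_triangle v q u]

theorem sum_dist_rpow_mul_topUp_le {p K : ℝ} (hp : 0 ≤ p) (hK : 1 ≤ K) {v q : M}
    {P B F : Finset M} {y : M → ℝ} (hPF : P ⊆ F) (hBF : B ⊆ F) (hy : ∀ u ∈ F, 0 ≤ y u)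
    (hP : ∑ u ∈ P, y u ≤ 1) (hB : 0 < ∑ u ∈ B, y u)
    (hdist : ∀ u ∈ B, dist v u ≤ K * dist v q) :
    ∑ u ∈ F, dist v u ^ p * topUp P B y u ≤
      K ^ p * ((1 - ∑ u ∈ P, y u) * dist v q ^ p + ∑ u ∈ P, dist v u ^ p * y u) := by
  have hcost : ∀ u ∈ B, dist v u ^ p ≤ K ^ p * dist v q ^ p := fun u hu ↦ by
    rw [← Real.mul_rpow (zero_le_one.trans hK) dist_nonneg]
    exact Real.rpow_le_rpow dist_nonneg (hdist u hu) hp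
  have hown : 0 ≤ ∑ u ∈ P, dist v u ^ p * y u := Finset.sum_nonneg fun u hu ↦
    mul_nonneg (Real.rpow_nonneg dist_nonneg p) (hy u (hPF hu))
  calc ∑ u ∈ F, dist v u ^ p * topUp P B y u
      ≤ ∑ u ∈ P, dist v u ^ p * y u + (1 - ∑ u ∈ P, y u) * (K ^ p * dist v q ^ p) :=
        sum_mul_topUp_le hPF hBF (fun u hu ↦ hy u (hBF hu)) hP hB hcost
    _ ≤ K ^ p * ∑ u ∈ P, dist v u ^ p * y u + (1 - ∑ u ∈ P, y u) * (K ^ p * dist v q ^ p) := by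
        gcongr
        exact le_mul_of_one_le_left hown (Real.one_le_rpow hK hp)
    _ = K ^ p * ((1 - ∑ u ∈ P, y u) * dist v q ^ p + ∑ u ∈ P, dist v u ^ p * y u) := by
        ring

theorem stmt16_general {p : ℝ} (hp : 0 ≤ p) {F D' : Finset M} {r : M → ℝ}
    (hsep : ∀ v ∈ D', ∀ q ∈ D', v ≠ q → 2 * r q ≤ dist v q)
    {B P : M → Finset M} (hBr : ∀ v ∈ D', ∀ u ∈ B v, dist v u ≤ r v)
    (hPF : ∀ v ∈ D', P v ⊆ F) (hBP : ∀ v ∈ D', B v ⊆ P v)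
    (hPdisj : ∀ v ∈ D', ∀ q ∈ D', v ≠ q → Disjoint (P v) (P q))
    {w : M → ℝ} (hw : ∀ v ∈ D', 0 ≤ w v)
    {other : M → M} (hother : ∀ v ∈ D', other v ∈ D' ∧ other v ≠ v)
    {y : M → ℝ} (hy : ∀ u ∈ F, 0 ≤ y u) (hyB : ∀ v ∈ D', 1 / 2 ≤ ∑ u ∈ B v, y u)
    (hyP : ∀ v ∈ D', ∑ u ∈ P v, y u ≤ 1) :
    ∃ x : M → M → ℝ,
      (∀ v ∈ D', ∀ u ∈ F, 0 ≤ x v u) ∧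
      (∀ v ∈ D', ∑ u ∈ F, x v u = 1) ∧
      (∀ v ∈ D', ∀ u ∈ F, x v u ≤ y u) ∧
      ∑ v ∈ D', w v * ∑ u ∈ F, dist v u ^ p * x v u ≤
        (3 / 2) ^ p * ∑ v ∈ D', w v *
          ((1 - ∑ u ∈ P v, y u) * dist v (other v) ^ p + ∑ u ∈ P v, dist v u ^ p * y u) := by
  have hBF (v) (hv : v ∈ D') : B v ⊆ F := (hBP v hv).trans (hPF v hv)
  have hBpos (v) (hv : v ∈ D') : 0 < ∑ u ∈ B v, y u := one_half_pos.trans_le (hyB v hv)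
  have hP_half (v) (hv : v ∈ D') : 1 / 2 ≤ ∑ u ∈ P v, y u :=
    (hyB v hv).trans <| Finset.sum_le_sum_of_subset_of_nonneg (hBP v hv)
      fun u hu _ ↦ hy u (hPF v hv hu)
  refine ⟨fun v ↦ topUp (P v) (B (other v)) y, fun v hv u hu ↦ ?_, fun v hv ↦ ?_,
    fun v hv u hu ↦ ?_, ?_⟩
  · exact topUp_nonneg (hy u hu) (hyP v hv) (hBpos _ (hother v hv).1).le
  · exact sum_topUp (hPF v hv) (hBF _ (hother v hv).1) (hBpos _ (hother v hv).1).ne'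
  · obtain ⟨hmem, hne⟩ := hother v hv
    have hdisj : Disjoint (P v) (B (other v)) :=
      (hPdisj v hv _ hmem hne.symm).mono_right (hBP _ hmem)
    exact topUp_le (hy u hu) hdisj (hBpos _ hmem).le (by linarith [hP_half v hv, hyB _ hmem])
  · rw [Finset.mul_sum]
    refine Finset.sum_le_sum fun v hv ↦ ?_
    obtain ⟨hmem, hne⟩ := hother v hv
    rw [mul_left_comm]
    exact mul_le_mul_of_nonneg_left
      (sum_dist_rpow_mul_topUp_le hp (by norm_num) (hPF v hv) (hBF _ hmem) hy (hyP v hv)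
        (hBpos _ hmem) fun u hu ↦
          dist_le_three_halves_mul_dist (hBr _ hmem u hu) (hsep v hv _ hmem hne.symm))
      (hw v hv)

end Metric

theorem two_mul_two_rpow_mul_le {a b d s : ℝ} (h : 2 ^ (1 + s) * max a b ≤ d) :
    2 * (2 ^ s * b) ≤ d :=
  calc 2 * (2 ^ s * b) = 2 ^ (1 + s) * b := by
        rw [Real.rpow_add two_pos, Real.rpow_one, mul_assoc]
    _ ≤ 2 ^ (1 + s) * max a b := by gcongr; exact le_max_right a b
    _ ≤ d := h

theorem stmt16 {M : Type*} [MetricSpace M] (p : ℝ) (hp : 1 ≤ p)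
    (F D' : Finset M) (hD' : 2 ≤ D'.card)
    (R : M → ℝ) (hR : ∀ v ∈ D', 0 ≤ R v)
    (hsep : ∀ v ∈ D', ∀ vb ∈ D', v ≠ vb →
      dist v vb ≥ 2 ^ (1 + 1 / p) * max (R v) (R vb))
    (B : M → Finset M)
    (hB : ∀ v ∈ D', ∀ u : M, u ∈ B v ↔ u ∈ F ∧ dist v u ≤ 2 ^ (1 / p) * R v)
    (P : M → Finset M) (hPF : ∀ v ∈ D', P v ⊆ F)
    (hBP : ∀ v ∈ D', B v ⊆ P v)
    (hPdisj : ∀ v ∈ D', ∀ vb ∈ D', v ≠ vb → Disjoint (P v) (P vb))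
    (w : M → ℝ) (hw : ∀ v ∈ D', 0 ≤ w v)
    (nn : M → M)
    (hnn : ∀ v ∈ D', nn v ∈ D' ∧ nn v ≠ v ∧
      ∀ q ∈ D', q ≠ v → dist v (nn v) ≤ dist v q) :
    ∀ y : M → ℝ, (∀ u ∈ F, 0 ≤ y u) →
      (∀ v ∈ D', 1 / 2 ≤ ∑ u ∈ B v, y u) →
      (∀ v ∈ D', ∑ u ∈ P v, y u ≤ 1) →
      ∃ x : M → M → ℝ,
        (∀ v ∈ D', ∀ u ∈ F, 0 ≤ x v u) ∧
        (∀ v ∈ D', ∑ u ∈ F, x v u = 1) ∧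
        (∀ v ∈ D', ∀ u ∈ F, x v u ≤ y u) ∧
        ∑ v ∈ D', w v * ∑ u ∈ F, dist v u ^ p * x v u ≤
          (3 / 2) ^ p * ∑ v ∈ D', w v *
            ((1 - ∑ u ∈ P v, y u) * dist v (nn v) ^ p +
              ∑ u ∈ P v, dist v u ^ p * y u) := fun _ hy hyB hyP ↦
  stmt16_general (zero_le_one.trans hp)
    (fun v hv q hq hvq ↦ two_mul_two_rpow_mul_le (hsep v hv q hq hvq))
    (fun v hv u hu ↦ ((hB v hv u).1 hu).2) hPF hBP hPdisj hw
    (fun v hv ↦ ⟨(hnn v hv).1, (hnn v hv).2.1⟩) hy hyB hyP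
end

section
/- Let (M,d) be a metric space, let p ≥ 1 be a real number, let I be a finite set, let v : I → M, let w : I → ℝ be nonnegative, and for each i ∈ I let u₁(i), u₂(i) ∈ M; set S_i := {u₁(i), u₂(i)} and R_i := (1/2)·(d(v_i, u₁(i))^p + d(v_i, u₂(i))^p). Let Ī ⊆ I be such that for every i ∈ I, either i ∈ Ī or there exists j ∈ Ī with S_i ∩ S_j ≠ ∅ and R_j ≤ R_i. Let C ⊆ M be finite and nonempty with C ∩ S_j ≠ ∅ for every j ∈ Ī. Then ∑_{i∈I} w_i·d(v_i, C)^p ≤ 2·3^p·∑_{i∈I} w_i·R_i, where d(v,C) := min_{c∈C} d(v,c). -/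
open Metric

/-!
Every location `v i` shares a facility `s` with a location `v j`, `j ∈ Ibar`, of no larger cost
(`j = i` if `i ∈ Ibar`), and some center `c` lies in `S j`. In the path `v i → s → v j → c` the
`p`-th power of each of the three steps is at most `2 * R i`, so `v i` is within `3` times the
longest step of `C`.
-/

theorem sum_rpow_le_card_rpow_mul {ι : Type*} {A : Finset ι} (hA : A.Nonempty) {f : ι → ℝ}
    {p t : ℝ} (hp : 0 ≤ p) (hf : ∀ i ∈ A, 0 ≤ f i) (hft : ∀ i ∈ A, f i ^ p ≤ t) :
    (∑ i ∈ A, f i) ^ p ≤ (A.card : ℝ) ^ p * t := by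
  obtain ⟨m, hm, hmax⟩ := A.exists_max_image f hA
  have sum_le : ∑ i ∈ A, f i ≤ A.card * f m := by
    simpa only [nsmul_eq_mul] using A.sum_le_card_nsmul f (f m) hmax
  calc (∑ i ∈ A, f i) ^ p
      ≤ (A.card * f m) ^ p := Real.rpow_le_rpow (Finset.sum_nonneg hf) sum_le hp
    _ = (A.card : ℝ) ^ p * f m ^ p := Real.mul_rpow (Nat.cast_nonneg _) (hf m hm)
    _ ≤ (A.card : ℝ) ^ p * t := by gcongr; exact hft m hm

theorem add_add_rpow_le_three_rpow_mul {a b c p t : ℝ} (hp : 0 ≤ p)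
    (ha : 0 ≤ a) (hb : 0 ≤ b) (hc : 0 ≤ c)
    (hat : a ^ p ≤ t) (hbt : b ^ p ≤ t) (hct : c ^ p ≤ t) :
    (a + b + c) ^ p ≤ 3 ^ p * t := by
  simpa [Fin.sum_univ_three] using
    sum_rpow_le_card_rpow_mul (f := ![a, b, c]) Finset.univ_nonempty hp
      (by simp [Fin.forall_fin_succ, ha, hb, hc]) (by simp [Fin.forall_fin_succ, hat, hbt, hct])

section PseudoMetricSpace

variable {M : Type*} [PseudoMetricSpace M] {p : ℝ}

theorem dist_rpow_le_add_of_mem_pair {x y u₁ u₂ : M} (hy : y ∈ ({u₁, u₂} : Set M)) :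
    dist x y ^ p ≤ dist x u₁ ^ p + dist x u₂ ^ p := by
  rcases hy with rfl | rfl
  · exact le_add_of_nonneg_right (by positivity)
  · exact le_add_of_nonneg_left (by positivity)

theorem infDist_rpow_le_of_three_steps {C : Set M} {x s y c : M} {t : ℝ} (hp : 0 ≤ p)
    (hc : c ∈ C) (hxs : dist x s ^ p ≤ t) (hys : dist y s ^ p ≤ t) (hyc : dist y c ^ p ≤ t) :
    infDist x C ^ p ≤ 3 ^ p * t := by
  have path_bound : infDist x C ≤ dist x s + dist y s + dist y c :=
    calc infDist x C
        ≤ dist x c := infDist_le_dist_of_mem hc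
      _ ≤ dist x s + dist s y + dist y c := dist_triangle4 x s y c
      _ = dist x s + dist y s + dist y c := by rw [dist_comm s y]
  calc infDist x C ^ p
      ≤ (dist x s + dist y s + dist y c) ^ p := Real.rpow_le_rpow infDist_nonneg path_bound hp
    _ ≤ 3 ^ p * t :=
        add_add_rpow_le_three_rpow_mul hp dist_nonneg dist_nonneg dist_nonneg hxs hys hyc

theorem stmt17_general (hp : 0 ≤ p) {I : Type*} (A : Finset I) (v : I → M) (w : I → ℝ)
    (hw : ∀ i ∈ A, 0 ≤ w i) (u₁ u₂ : I → M)
    (S : I → Set M) (hS : ∀ i, S i = {u₁ i, u₂ i})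
    (R : I → ℝ)
    (hR : ∀ i, R i = (1 / 2) * (dist (v i) (u₁ i) ^ p + dist (v i) (u₂ i) ^ p))
    (Ibar : Set I)
    (hIbar : ∀ i ∈ A, i ∈ Ibar ∨ ∃ j ∈ Ibar, (S i ∩ S j).Nonempty ∧ R j ≤ R i)
    (C : Set M) (hCS : ∀ j ∈ Ibar, (C ∩ S j).Nonempty) :
    ∑ i ∈ A, w i * infDist (v i) C ^ p ≤ 2 * 3 ^ p * ∑ i ∈ A, w i * R i := by
  have facility_bound (i : I) {s : M} (hs : s ∈ S i) : dist (v i) s ^ p ≤ 2 * R i := by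
    linarith [dist_rpow_le_add_of_mem_pair (x := v i) (p := p) (hS i ▸ hs), hR i]
  have remover_exists (i : I) (hi : i ∈ A) : ∃ j ∈ Ibar, (S i ∩ S j).Nonempty ∧ R j ≤ R i :=
    (hIbar i hi).elim
      (fun hi' ↦ ⟨i, hi', by simpa only [Set.inter_self] using (hCS i hi').right, le_rfl⟩) id
  have location_bound (i : I) (hi : i ∈ A) : infDist (v i) C ^ p ≤ 3 ^ p * (2 * R i) := by
    obtain ⟨j, hj, ⟨s, hsi, hsj⟩, hji⟩ := remover_exists i hi
    obtain ⟨c, hcC, hcj⟩ := hCS j hj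
    have bound_via_j {s : M} (hs : s ∈ S j) : dist (v j) s ^ p ≤ 2 * R i :=
      (facility_bound j hs).trans (by gcongr)
    exact infDist_rpow_le_of_three_steps hp hcC (facility_bound i hsi) (bound_via_j hsj)
      (bound_via_j hcj)
  calc ∑ i ∈ A, w i * infDist (v i) C ^ p
      ≤ ∑ i ∈ A, w i * (3 ^ p * (2 * R i)) :=
        Finset.sum_le_sum fun i hi ↦ mul_le_mul_of_nonneg_left (location_bound i hi) (hw i hi)
    _ = 2 * 3 ^ p * ∑ i ∈ A, w i * R i := by
        rw [Finset.mul_sum]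
        exact Finset.sum_congr rfl fun i _ ↦ by ring

end PseudoMetricSpace

theorem stmt17 {M : Type*} [MetricSpace M] (p : ℝ) (hp : 1 ≤ p)
    {I : Type*} [Fintype I] (v : I → M) (w : I → ℝ) (hw : ∀ i, 0 ≤ w i)
    (u₁ u₂ : I → M)
    (S : I → Set M) (hS : ∀ i, S i = {u₁ i, u₂ i})
    (R : I → ℝ)
    (hR : ∀ i, R i = (1 / 2) * (dist (v i) (u₁ i) ^ p + dist (v i) (u₂ i) ^ p))
    (Ibar : Finset I)
    (hIbar : ∀ i : I, i ∈ Ibar ∨ ∃ j ∈ Ibar, (S i ∩ S j).Nonempty ∧ R j ≤ R i)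
    (C : Finset M) (hC : C.Nonempty)
    (hCS : ∀ j ∈ Ibar, ((C : Set M) ∩ S j).Nonempty) :
    ∑ i, w i * infDist (v i) (C : Set M) ^ p ≤ 2 * 3 ^ p * ∑ i, w i * R i :=
  stmt17_general (zero_le_one.trans hp) Finset.univ v w (fun i _ ↦ hw i) u₁ u₂ S hS R hR Ibar
    (fun i _ ↦ hIbar i) C hCS
end

section
/- Let F be a finite type, let ℓ ≥ 1, and let P_1, …, P_ℓ be pairwise disjoint subsets of F whose union is F. Let k, α_1, …, α_ℓ, β_1, …, β_ℓ be natural numbers with α_i ≤ β_i for every i and ∑_{i=1}^ℓ α_i ≤ k. Then there exists a matroid on ground set F whose independent sets are exactly the sets T ⊆ F satisfying |T ∩ P_i| ≤ β_i for every i = 1,…,ℓ and ∑_{i=1}^ℓ max(|T ∩ P_i|, α_i) ≤ k. -/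
/-!
Whether `T` is admissible depends only on its vector of part sizes `i ↦ |T ∩ P i|`, and the
admissible vectors are the independent vectors of an integral polymatroid. For the exchange
property, let `a` and `b` be admissible with `∑ a < ∑ b`. If `a i < b i` and `a i < α i` for some
`i`, raising `a i` by one leaves `∑ max a α` unchanged. Otherwise `max a α - a ≤ max b α - b`
coordinatewise, so `∑ max a α < ∑ max b α ≤ k` leaves room to raise any `a i < b i`.
-/

/-- `V` is the set of independent vectors of an integral polymatroid on `ι`. The exchange axiom
is Welsh's: a vector `a` of smaller total than `b` can be raised while staying below `a ⊔ b`. -/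
structure IsIntegralPolymatroid {ι : Type*} [Fintype ι] (V : Set (ι → ℕ)) : Prop where
  zero_mem : 0 ∈ V
  isLowerSet : IsLowerSet V
  bddAbove : BddAbove V
  exists_lt_le_sup : ∀ ⦃a⦄, a ∈ V → ∀ ⦃b⦄, b ∈ V → ∑ i, a i < ∑ i, b i →
    ∃ c ∈ V, a < c ∧ c ≤ a ⊔ b

/-- The vector of part sizes `|T ∩ P i|`, through which a set enters cardinality constraints on
the parts. An infinite intersection counts as `0`. -/
noncomputable def partCard {ι F : Type*} (P : ι → Set F) (T : Set F) (i : ι) : ℕ :=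
  (T ∩ P i).ncard

section PartCard

variable {ι F : Type*} {P : ι → Set F} {I J S T : Set F} {x : F} {i : ι}

theorem partCard_empty : partCard P ∅ = 0 := by
  ext i
  simp [partCard]

theorem partCard_mono (hT : ∀ i, (T ∩ P i).Finite) (hST : S ⊆ T) : partCard P S ≤ partCard P T :=
  fun i ↦ Set.ncard_le_ncard (Set.inter_subset_inter_left _ hST) (hT i)

theorem partCard_insert_le_add_one : partCard P (insert x T) i ≤ partCard P T i + 1 := by
  by_cases hx : x ∈ P i
  · simpa only [partCard, Set.insert_inter_of_mem hx] using Set.ncard_insert_le x (T ∩ P i)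
  · simp only [partCard, Set.insert_inter_of_notMem hx, Nat.le_succ]

theorem partCard_insert_of_notMem (hx : x ∉ P i) : partCard P (insert x T) i = partCard P T i := by
  rw [partCard, Set.insert_inter_of_notMem hx, partCard]

theorem partCard_inter_iUnion : partCard P (T ∩ ⋃ i, P i) = partCard P T := by
  ext i
  rw [partCard, Set.inter_assoc, Set.inter_eq_right.mpr (Set.subset_iUnion P i), partCard]

theorem ncard_inter_iUnion [Fintype ι] (hP : Pairwise (Function.onFun Disjoint P))
    (hT : ∀ i, (T ∩ P i).Finite) : (T ∩ ⋃ i, P i).ncard = ∑ i, partCard P T i := by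
  rw [Set.inter_iUnion, Set.ncard_iUnion_of_finite hT
    fun i j hij ↦ (hP hij).mono Set.inter_subset_right Set.inter_subset_right,
    finsum_eq_sum_of_fintype]
  rfl

theorem exists_partCard_insert_le {c : ι → ℕ} (hP : Pairwise (Function.onFun Disjoint P))
    (hI : ∀ i, (I ∩ P i).Finite) (hIc : partCard P I < c)
    (hcIJ : c ≤ partCard P I ⊔ partCard P J) :
    ∃ x ∈ J, x ∉ I ∧ partCard P (insert x I) ≤ c := by
  obtain ⟨hle, i, hic⟩ := Pi.lt_def.mp hIc
  have hiJ : partCard P I i < partCard P J i :=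
    (lt_sup_iff.mp (hic.trans_le (hcIJ i))).resolve_left (lt_irrefl _)
  obtain ⟨x, ⟨hxJ, hxi⟩, hxI⟩ := Set.exists_mem_notMem_of_ncard_lt_ncard hiJ (hI i)
  refine ⟨x, hxJ, fun hx ↦ hxI ⟨hx, hxi⟩, fun j ↦ ?_⟩
  obtain rfl | hij := eq_or_ne i j
  · exact partCard_insert_le_add_one.trans hic
  · rw [partCard_insert_of_notMem ((hP hij).notMem_of_mem_left hxi)]
    exact hle j

theorem finite_inter_of_forall_finite_partCard_mem {V : Set (ι → ℕ)} (hV : BddAbove V)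
    (hT : ∀ S ⊆ T, S.Finite → partCard P S ∈ V) (i : ι) : (T ∩ P i).Finite := by
  obtain ⟨u, hu⟩ := hV
  by_contra hinf
  obtain ⟨S, hST, hS, hScard⟩ := Set.Infinite.exists_subset_ncard_eq hinf (u i + 1)
  have hle : partCard P S i ≤ u i := hu (hT S (hST.trans Set.inter_subset_left) hS) i
  rw [partCard, Set.inter_eq_left.mpr (hST.trans Set.inter_subset_right), hScard] at hle
  exact Nat.not_succ_le_self _ hle

theorem partCard_mem_of_forall_finite_partCard_mem [Finite ι] {V : Set (ι → ℕ)} (hV : BddAbove V)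
    (hT : ∀ S ⊆ T, S.Finite → partCard P S ∈ V) : partCard P T ∈ V := by
  have hfinite : (T ∩ ⋃ i, P i).Finite := by
    rw [Set.inter_iUnion]
    exact Set.finite_iUnion (finite_inter_of_forall_finite_partCard_mem hV hT)
  simpa only [partCard_inter_iUnion] using hT _ Set.inter_subset_left hfinite

end PartCard

namespace IsIntegralPolymatroid

variable {ι F : Type*} [Fintype ι] {V : Set (ι → ℕ)} {P : ι → Set F} {I J : Set F}

theorem exists_partCard_insert_mem (hV : IsIntegralPolymatroid V)
    (hP : Pairwise (Function.onFun Disjoint P)) (hI : I.Finite) (hJ : J.Finite)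
    (hIV : partCard P I ∈ V) (hJV : partCard P J ∈ V) (hIJ : I.ncard < J.ncard) :
    ∃ x ∈ J, x ∉ I ∧ partCard P (insert x I) ∈ V := by
  by_cases houtside : (I \ ⋃ i, P i).ncard < (J \ ⋃ i, P i).ncard
  · obtain ⟨x, ⟨hxJ, hxP⟩, hxI⟩ := Set.exists_mem_notMem_of_ncard_lt_ncard houtside hI.sdiff
    refine ⟨x, hxJ, fun hx ↦ hxI ⟨hx, hxP⟩, ?_⟩
    have hcard : partCard P (insert x I) = partCard P I :=
      funext fun i ↦ partCard_insert_of_notMem fun hxi ↦ hxP (Set.mem_iUnion_of_mem i hxi)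
    rwa [hcard]
  · have hsum : ∑ i, partCard P I i < ∑ i, partCard P J i := by
      rw [← ncard_inter_iUnion hP fun i ↦ hI.inter_of_left (P i),
        ← ncard_inter_iUnion hP fun i ↦ hJ.inter_of_left (P i)]
      have hIsplit := Set.ncard_inter_add_ncard_sdiff_eq_ncard I (⋃ i, P i) hI
      have hJsplit := Set.ncard_inter_add_ncard_sdiff_eq_ncard J (⋃ i, P i) hJ
      lia
    obtain ⟨c, hcV, hIc, hcIJ⟩ := hV.exists_lt_le_sup hIV hJV hsum
    obtain ⟨x, hxJ, hxI, hxc⟩ :=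
      exists_partCard_insert_le hP (fun i ↦ hI.inter_of_left (P i)) hIc hcIJ
    exact ⟨x, hxJ, hxI, hV.isLowerSet hxc hcV⟩

/-- The matroid induced by an integral polymatroid along disjoint parts `P i`: a set is
independent when it has finite parts whose sizes form an independent vector. Elements outside all
parts are coloops. -/
def inducedMatroid (hV : IsIntegralPolymatroid V) (hP : Pairwise (Function.onFun Disjoint P)) :
    Matroid F :=
  (IndepMatroid.ofFinitaryCardAugment Set.univ
    (fun T ↦ (∀ i, (T ∩ P i).Finite) ∧ partCard P T ∈ V)
    (indep_empty := ⟨by simp, by simpa only [partCard_empty] using hV.zero_mem⟩)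
    (indep_subset := fun _ _ ⟨hJ, hJV⟩ hIJ ↦
      ⟨fun i ↦ (hJ i).subset (Set.inter_subset_inter_left _ hIJ),
        hV.isLowerSet (partCard_mono hJ hIJ) hJV⟩)
    (indep_aug := fun _ _ ⟨_, hIV⟩ hI ⟨_, hJV⟩ hJ hIJ ↦
      have ⟨x, hxJ, hxI, hxV⟩ := hV.exists_partCard_insert_mem hP hI hJ hIV hJV hIJ
      ⟨x, hxJ, hxI, fun i ↦ (hI.insert x).inter_of_left (P i), hxV⟩)
    (indep_compact := fun _ hI ↦
      have hIV := fun J hJI hJ ↦ (hI J hJI hJ).2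
      ⟨finite_inter_of_forall_finite_partCard_mem hV.bddAbove hIV,
        partCard_mem_of_forall_finite_partCard_mem hV.bddAbove hIV⟩)
    (subset_ground := fun _ _ ↦ Set.subset_univ _)).matroid

end IsIntegralPolymatroid

section RangeVectors

variable {ι : Type*}

theorem sum_max_lt_sum_max {M : Type*} [AddCommMonoid M] [LinearOrder M]
    [IsOrderedCancelAddMonoid M] {s : Finset ι} {a b c : ι → M}
    (hc : ∀ i ∈ s, a i < b i → c i ≤ a i) (hab : ∑ i ∈ s, a i < ∑ i ∈ s, b i) :
    ∑ i ∈ s, max (a i) (c i) < ∑ i ∈ s, max (b i) (c i) := by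
  have hterm : ∀ i ∈ s, max (a i) (c i) + b i ≤ max (b i) (c i) + a i := by
    intro i hi
    rcases lt_or_ge (a i) (b i) with hlt | hge
    · rw [max_eq_left (hc i hi hlt), max_eq_left ((hc i hi hlt).trans hlt.le), add_comm]
    · rw [max_add]
      exact max_le ((add_comm _ _).trans_le (add_le_add_left (le_max_left _ _) _))
        (add_le_add (le_max_right _ _) hge)
  have hsum := Finset.sum_le_sum hterm
  rw [Finset.sum_add_distrib, Finset.sum_add_distrib] at hsum
  exact lt_of_add_lt_add_right ((add_lt_add_right hab _).trans_le hsum)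

variable [Fintype ι] {α β : ι → ℕ} {k : ℕ} {a b : ι → ℕ}

/-- For `α ≤ β`, the vectors that can be raised to a vector between `α` and `β` of total at most
`k`. The condition refers to the smallest candidate, which is `max a α`. -/
def rangeVectors (α β : ι → ℕ) (k : ℕ) : Set (ι → ℕ) :=
  {a | (∀ i, a i ≤ β i) ∧ ∑ i, max (a i) (α i) ≤ k}

theorem sum_max_update_add_one_le [DecidableEq ι] (i : ι) :
    ∑ j, max (Function.update a i (a i + 1) j) (α j) ≤ ∑ j, max (a j) (α j) + 1 := by
  calc ∑ j, max (Function.update a i (a i + 1) j) (α j)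
      ≤ ∑ j, (max (a j) (α j) + if j = i then 1 else 0) :=
        Finset.sum_le_sum fun j _ ↦ by grind [Function.update_apply]
    _ = ∑ j, max (a j) (α j) + 1 := by simp [Finset.sum_add_distrib]

theorem sum_max_update_add_one_of_lt [DecidableEq ι] {i : ι} (hi : a i < α i) :
    ∑ j, max (Function.update a i (a i + 1) j) (α j) = ∑ j, max (a j) (α j) :=
  Finset.sum_congr rfl fun j _ ↦ by grind [Function.update_apply]

theorem exists_lt_sum_max_update_le [DecidableEq ι] (ha : ∑ i, max (a i) (α i) ≤ k)
    (hb : ∑ i, max (b i) (α i) ≤ k) (hab : ∑ i, a i < ∑ i, b i) :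
    ∃ i, a i < b i ∧ ∑ j, max (Function.update a i (a i + 1) j) (α j) ≤ k := by
  by_cases hfree : ∃ i, a i < b i ∧ a i < α i
  · obtain ⟨i, hib, hiα⟩ := hfree
    exact ⟨i, hib, (sum_max_update_add_one_of_lt hiα).trans_le ha⟩
  · push Not at hfree
    obtain ⟨i, -, hib⟩ := Finset.exists_lt_of_sum_lt hab
    have hroom : ∑ j, max (a j) (α j) < ∑ j, max (b j) (α j) :=
      sum_max_lt_sum_max (fun j _ ↦ hfree j) hab
    exact ⟨i, hib, (sum_max_update_add_one_le i).trans (hroom.trans_le hb)⟩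

theorem isIntegralPolymatroid_rangeVectors (hα : ∑ i, α i ≤ k) :
    IsIntegralPolymatroid (rangeVectors α β k) where
  zero_mem := ⟨fun _ ↦ Nat.zero_le _, by simpa using hα⟩
  isLowerSet _ _ hba hb := ⟨fun i ↦ (hba i).trans (hb.1 i),
    (Finset.sum_le_sum fun i _ ↦ max_le_max_right _ (hba i)).trans hb.2⟩
  bddAbove := ⟨β, fun _ ha ↦ ha.1⟩
  exists_lt_le_sup a ha b hb hab := by
    classical
    obtain ⟨i, hib, hsum⟩ := exists_lt_sum_max_update_le ha.2 hb.2 hab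
    have hle : Function.update a i (a i + 1) ≤ a ⊔ b :=
      update_le_iff.mpr ⟨le_sup_of_le_right hib, fun _ _ ↦ le_sup_left⟩
    exact ⟨Function.update a i (a i + 1), ⟨fun j ↦ (hle j).trans (sup_le (ha.1 j) (hb.1 j)), hsum⟩,
      lt_update_self_iff.mpr (Nat.lt_succ_self _), hle⟩

end RangeVectors

theorem stmt18_general {ι F : Type*} [Fintype ι] {P : ι → Set F}
    (hP : Pairwise (Function.onFun Disjoint P)) {k : ℕ} {α : ι → ℕ} (β : ι → ℕ)
    (hα : ∑ i, α i ≤ k) :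
    ∃ M : Matroid F, M.E = Set.univ ∧
      ∀ T : Set F, M.Indep T ↔ (∀ i, (T ∩ P i).Finite) ∧
        (∀ i, (T ∩ P i).ncard ≤ β i) ∧ ∑ i, max (T ∩ P i).ncard (α i) ≤ k :=
  ⟨(isIntegralPolymatroid_rangeVectors hα).inducedMatroid hP, rfl, fun _ ↦ Iff.rfl⟩

theorem stmt18 {F : Type*} [Fintype F] (ℓ : ℕ) (hℓ : 1 ≤ ℓ)
    (P : Fin ℓ → Set F)
    (hPdisj : ∀ i j : Fin ℓ, i ≠ j → Disjoint (P i) (P j))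
    (hPcover : (⋃ i, P i) = Set.univ)
    (k : ℕ) (α β : Fin ℓ → ℕ)
    (hαβ : ∀ i, α i ≤ β i) (hαk : ∑ i, α i ≤ k) :
    ∃ Mat : Matroid F, Mat.E = Set.univ ∧
      ∀ T : Set F, Mat.Indep T ↔
        ((∀ i, (T ∩ P i).ncard ≤ β i) ∧ ∑ i, max (T ∩ P i).ncard (α i) ≤ k) := by
  simpa only [Set.toFinite, implies_true, true_and] using stmt18_general hPdisj β hαk
end
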